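/- arXiv:0812.5002 — 2 statements merged into one kernel-verified Lean document; each statement's English description precedes it below -/
import Mathlib

section
/- Every Lie super-bialgebra structure (L, [·,·], Δ) on the centerless twisted N=2 superconformal algebra L is triangular coboundary; that is, there exists an even element r ∈ Im(1⊗1 − τ) ⊂ L ⊗ L satisfying the classical Yang–Baxter equation c(r) = [r^{12}, r^{13}] + [r^{12}, r^{23}] + [r^{13}, r^{23}] = 0 such that Δ(x) = (−1)^{[r][x]} x ∗ r for all x ∈ L. -/
/-!
Indices add up under the bracket: `[e i, e j]` is a multiple of `e (i + j)` for the group structure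
on `Idx` given by parity and degree, so all computations happen along the antidiagonals `a + b = i`
of `𝓛 ⊗ 𝓛`.

The main point is that every even derivation `d : 𝓛 → 𝓛 ⊗ 𝓛` is inner, which is shown by subtracting
three inner derivations. As `L_0` acts diagonally, a first one yields `d(L_0) = 0`, so that `d`
preserves the index. The relations of `L_{±1}` with `T_{±1/2}` show that the odd-odd component of
`d(T_{1/2})` is in the image of `T_{1/2}`, and a second one removes it; the odd-odd components of
all `d(L_m)` and `d(T_r)` vanish then. A third one yields `d(G_{1/2}) = 0`. Now the relation
`[G_0, G_0] = 2 L_0` is a first-order recurrence for the components of `d(T_{-1/2})`, whose line of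
solutions is reduced to `0` by the relation of `L_1`, `T_{1/2}` and `T_{-1/2}`. As `T_{-1/2}` and
`G_{1/2}` generate `𝓛`, it follows that `d = 0`.

A cobracket is therefore `x ↦ x ∗ r` with `r` even. Neither `𝓛 ⊗ 𝓛` nor `𝓛 ⊗ 𝓛 ⊗ 𝓛` contains nonzero
elements killed by all `L_N`. The first fact makes `r` skew. For skew `r`, the left-hand side of the
co-Jacobi identity at `x` is `x ∗ c(r)`, and the second fact gives `c(r) = 0`.
-/

namespace N2

/-- Basis indices of the centerless twisted N=2 superconformal algebra:
`L m` is the Virasoro generator `L_m` (`m ∈ ℤ`),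
`T k` is the Heisenberg generator `T_{k+1/2}` (`k ∈ ℤ`, index in `1/2 + ℤ`),
`G n` is the fermionic generator `G_{n/2}` (`n ∈ ℤ`, index in `(1/2)ℤ`). -/
inductive Idx : Type
  | L : ℤ → Idx
  | T : ℤ → Idx
  | G : ℤ → Idx
  deriving DecidableEq

noncomputable section

/-- The centerless twisted N=2 superconformal algebra `𝓛`, as the free
complex vector space on the basis `{L_m, T_r, G_p}`. -/
abbrev Lsa : Type := Idx →₀ ℂ

/-- `𝓛 ⊗ 𝓛`, realized as the free complex vector space on pairs of basis indices. -/
abbrev V : Type := (Idx × Idx) →₀ ℂ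

/-- `𝓛 ⊗ 𝓛 ⊗ 𝓛`. -/
abbrev W : Type := (Idx × Idx × Idx) →₀ ℂ

/-- the basis vector indexed by `i`. -/
def e (i : Idx) : Lsa := Finsupp.single i 1

/-- the ℤ₂-parity of the basis elements: `L_m, T_r` are even, `G_p` is odd. -/
def par : Idx → ZMod 2
  | .L _ => 0
  | .T _ => 0
  | .G _ => 1

/-- the sign `(-1)^p` for `p ∈ ℤ₂`. -/
def sgn (p : ZMod 2) : ℂ := if p = 0 then 1 else -1

/-- the `(1/2)ℤ`-degree of a basis element, as a rational number:
`L_m ↦ m`, `T_{k+1/2} ↦ k + 1/2`, `G_{n/2} ↦ n/2`. -/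
def qdeg : Idx → ℚ
  | .L m => (m : ℚ)
  | .T k => (k : ℚ) + 1/2
  | .G n => (n : ℚ) / 2

/-- The super-bracket of `𝓛` on basis elements:
`[L_m, L_n] = (m-n) L_{m+n}`, `[L_m, T_r] = -r T_{r+m}`, `[T_r, T_s] = 0`,
`[L_m, G_p] = (m/2 - p) G_{p+m}`, `[T_r, G_p] = G_{p+r}`,
`[G_p, G_q] = (-1)^{2p} 2 L_{p+q}` if `p+q ∈ ℤ` and
`[G_p, G_q] = (-1)^{2p+1} (p-q) T_{p+q}` if `p+q ∈ 1/2+ℤ`,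
together with the super skew-symmetric counterparts. -/
def bk : Idx → Idx → Lsa
  | .L m, .L n => ((m : ℂ) - n) • e (.L (m + n))
  | .L m, .T k => (-((k : ℂ) + 1/2)) • e (.T (k + m))
  | .L m, .G n => (((m : ℂ) - n) / 2) • e (.G (n + 2*m))
  | .T k, .L m => ((k : ℂ) + 1/2) • e (.T (k + m))
  | .T _, .T _ => 0
  | .T k, .G n => e (.G (n + 2*k + 1))
  | .G n, .L m => (-((m : ℂ) - n) / 2) • e (.G (n + 2*m))
  | .G n, .T k => - e (.G (n + 2*k + 1))
  | .G n, .G n' =>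
      if (n + n') % 2 = 0 then
        ((-1 : ℂ) ^ n * 2) • e (.L ((n + n') / 2))
      else
        ((-1 : ℂ) ^ (n + 1) * (((n : ℂ) - n') / 2)) • e (.T ((n + n' - 1) / 2))

/-- the bracket of `𝓛`, extended bilinearly to all of `𝓛`. -/
def br (x y : Lsa) : Lsa :=
  x.sum fun i a => y.sum fun j b => (a * b) • bk i j

/-- the adjoint diagonal action of `𝓛` on `𝓛 ⊗ 𝓛`:
`x ∗ (a ⊗ b) = [x,a] ⊗ b + (-1)^{[x][a]} a ⊗ [x,b]`. -/
def act2 (x : Lsa) (v : V) : V :=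
  x.sum fun i a => v.sum fun p c =>
    (a * c) •
      (((bk i p.1).sum fun k t => Finsupp.single (k, p.2) t)
        + sgn (par i * par p.1) • ((bk i p.2).sum fun k t => Finsupp.single (p.1, k) t))

/-- the adjoint diagonal action of `𝓛` on `𝓛 ⊗ 𝓛 ⊗ 𝓛`. -/
def act3 (x : Lsa) (w : W) : W :=
  x.sum fun i a => w.sum fun p c =>
    (a * c) •
      (((bk i p.1).sum fun k t => Finsupp.single (k, p.2.1, p.2.2) t)
        + sgn (par i * par p.1) •
            ((bk i p.2.1).sum fun k t => Finsupp.single (p.1, k, p.2.2) t)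
        + sgn (par i * (par p.1 + par p.2.1)) •
            ((bk i p.2.2).sum fun k t => Finsupp.single (p.1, p.2.1, k) t))

/-- the adjoint diagonal action of `𝓛` on the `n`-fold tensor power `𝓛^{⊗n}`,
realized as the free complex vector space on `n`-tuples of basis indices:
`x ∗ (a₁ ⊗ ⋯ ⊗ aₙ) = Σ_k (-1)^{[x]([a₁]+⋯+[a_{k-1}])} a₁ ⊗ ⋯ ⊗ [x,a_k] ⊗ ⋯ ⊗ aₙ`. -/
def actN (n : ℕ) (x : Lsa) (v : (Fin n → Idx) →₀ ℂ) : (Fin n → Idx) →₀ ℂ :=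
  x.sum fun i a => v.sum fun f c =>
    (a * c) •
      (Finset.univ.sum fun k : Fin n =>
        sgn (par i * ((Finset.univ.filter fun l => l < k).sum fun l => par (f l))) •
          ((bk i (f k)).sum fun j t => Finsupp.single (Function.update f k j) t))

/-- the super-twist map `τ : 𝓛 ⊗ 𝓛 → 𝓛 ⊗ 𝓛`, `τ(x ⊗ y) = (-1)^{[x][y]} y ⊗ x`. -/
def tau (v : V) : V :=
  v.sum fun p c => (sgn (par p.1 * par p.2) * c) • Finsupp.single (p.2, p.1) 1

/-- the image `Im(1⊗1 - τ) ⊂ 𝓛 ⊗ 𝓛`. -/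
def ImOneSubTau : Set V := Set.range fun v : V => v - tau v

/-- the super-cyclic map `ξ` on `𝓛 ⊗ 𝓛 ⊗ 𝓛`:
`ξ(x₁ ⊗ x₂ ⊗ x₃) = (-1)^{[x₁]([x₂]+[x₃])} x₂ ⊗ x₃ ⊗ x₁`. -/
def xi (w : W) : W :=
  w.sum fun p c =>
    (sgn (par p.1 * (par p.2.1 + par p.2.2)) * c) • Finsupp.single (p.2.1, p.2.2, p.1) 1

/-- `c(r) = [r¹², r¹³] + [r¹², r²³] + [r¹³, r²³] ∈ 𝓛 ⊗ 𝓛 ⊗ 𝓛` for `r ∈ 𝓛 ⊗ 𝓛`. -/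
def cYB (r : V) : W :=
  r.sum fun p a => r.sum fun q b =>
    (a * b) •
      (sgn (par q.1 * par p.2) •
          ((bk p.1 q.1).sum fun k t => Finsupp.single (k, p.2, q.2) t)
        + ((bk p.2 q.1).sum fun k t => Finsupp.single (p.1, k, q.2) t)
        + sgn (par q.1 * par p.2) •
            ((bk p.2 q.2).sum fun k t => Finsupp.single (p.1, q.1, k) t))

/-- `1 ⊗ D : 𝓛 ⊗ 𝓛 → 𝓛 ⊗ 𝓛 ⊗ 𝓛` for an even map `D : 𝓛 → 𝓛 ⊗ 𝓛`. -/
def oneTensorMap (D : Lsa → V) (v : V) : W :=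
  v.sum fun p c => c • ((D (e p.2)).sum fun q t => Finsupp.single (p.1, q.1, q.2) t)

/-- `r ∈ 𝓛 ⊗ 𝓛` is homogeneous of parity `ε ∈ ℤ₂`. -/
def IsParityV (ε : ZMod 2) (r : V) : Prop := ∀ p ∈ r.support, par p.1 + par p.2 = ε

/-- `r ∈ 𝓛 ⊗ 𝓛` is even (degree `0̄`). -/
def IsEvenV (r : V) : Prop := IsParityV 0 r

/-- `r` lies in the graded component `V_ι = Σ_{j+k=ι} 𝓛_j ⊗ 𝓛_k` of `V = 𝓛 ⊗ 𝓛`. -/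
def IsDegV (ι : ℚ) (r : V) : Prop := ∀ p ∈ r.support, qdeg p.1 + qdeg p.2 = ι

/-- the linear map `𝓛 → M` with the prescribed values on the basis. -/
def ofBasis {M : Type*} [AddCommMonoid M] [Module ℂ M] (g : Idx → M) : Lsa →ₗ[ℂ] M :=
  Finsupp.lsum ℂ fun i => LinearMap.toSpanSingleton ℂ M (g i)

/-- the inner super-derivation `a_inn` attached to `a ∈ 𝓛 ⊗ 𝓛` of parity `ε`:
`a_inn(x) = (-1)^{[a][x]} x ∗ a` for homogeneous `x`, extended linearly. -/
def innMap (ε : ZMod 2) (a : V) : Lsa →ₗ[ℂ] V :=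
  ofBasis fun i => sgn (ε * par i) • act2 (e i) a

/-- `d : 𝓛 → 𝓛 ⊗ 𝓛` is a super-derivation of parity `ε`:
`d(𝓛_ī) ⊆ V_{ī+ε}` and
`d([x,y]) = (-1)^{[d][x]} x ∗ d(y) - (-1)^{[y]([d]+[x])} y ∗ d(x)`
for homogeneous `x, y` (stated on basis elements and extended bilinearly). -/
def IsDerOfParity (ε : ZMod 2) (d : Lsa →ₗ[ℂ] V) : Prop :=
  (∀ i : Idx, IsParityV (par i + ε) (d (e i))) ∧
  (∀ i j : Idx,
    d (bk i j)
      = sgn (ε * par i) • act2 (e i) (d (e j))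
        - sgn (par j * (ε + par i)) • act2 (e j) (d (e i)))

/-- `d` is homogeneous of degree `ι ∈ (1/2)ℤ` with respect to the `(1/2)ℤ`-grading:
`d(𝓛_j) ⊆ V_{ι+j}`. -/
def IsDegHomogDer (ι : ℚ) (d : Lsa →ₗ[ℂ] V) : Prop :=
  ∀ i : Idx, IsDegV (ι + qdeg i) (d (e i))

/-- `D : 𝓛 → 𝓛 ⊗ 𝓛` defines a Lie super-bialgebra structure on `𝓛`: it is linear,
`D(𝓛_ī) ⊆ Σ_j 𝓛_j̄ ⊗ 𝓛_{ī-j̄}`, `Im D ⊆ Im(1⊗1-τ)`,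
`(1⊗1⊗1 + ξ + ξ²)(1 ⊗ D)D = 0`, and
`D([x,y]) = x ∗ D(y) - (-1)^{[x][y]} y ∗ D(x)`. -/
structure IsLieSuperBialgebraDelta (D : Lsa → V) : Prop where
  linear : IsLinearMap ℂ D
  parity : ∀ i : Idx, IsParityV (par i) (D (e i))
  skewIm : ∀ x : Lsa, D x ∈ ImOneSubTau
  coJacobi : ∀ x : Lsa,
    oneTensorMap D (D x) + xi (oneTensorMap D (D x)) + xi (xi (oneTensorMap D (D x))) = 0
  cocycle : ∀ i j : Idx,
    D (bk i j) = act2 (e i) (D (e j)) - sgn (par i * par j) • act2 (e j) (D (e i))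

section Grading

lemma zmod_two_eq_zero_or_one (p : ZMod 2) : p = 0 ∨ p = 1 := by
  revert p; decide

/-- Twice the degree `qdeg`, so as to have integer values. -/
def deg2 : Idx → ℤ
  | .L m => 2 * m
  | .T k => 2 * k + 1
  | .G n => n

/-- A basis index is determined by its parity and its doubled degree, and all pairs occur. -/
def idxEquiv : Idx ≃ ZMod 2 × ℤ where
  toFun i := (par i, deg2 i)
  invFun p := if p.1 = 1 then .G p.2 else if p.2 % 2 = 0 then .L (p.2 / 2) else .T (p.2 / 2)
  left_inv i := by
    rcases i with m | k | n
    · simp [par, deg2]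
    · simp [par, deg2, show (2 * k + 1) % 2 = 1 by omega, show (2 * k + 1) / 2 = k by omega]
    · simp [par, deg2]
  right_inv := by
    rintro ⟨p, n⟩
    obtain rfl | rfl := zmod_two_eq_zero_or_one p
    · rcases Int.even_or_odd' n with ⟨a, rfl | rfl⟩
      · simp [par, deg2]
      · simp [par, deg2, show (2 * a + 1) % 2 = 1 by omega, show (2 * a + 1) / 2 = a by omega]
    · simp [par, deg2]

/-- Addition of parities and degrees: the bracket of `e i` and `e j` is a multiple of
`e (i + j)`, so that the algebra is graded by the group of its own basis indices. -/
instance : AddCommGroup Idx := idxEquiv.addCommGroup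

/-- The additive equivalence underlying `idxEquiv`. -/
def idxAddEquiv : Idx ≃+ ZMod 2 × ℤ := idxEquiv.addEquiv

/-- `par` as a group homomorphism. -/
def parHom : Idx →+ ZMod 2 := (AddMonoidHom.fst _ _).comp idxAddEquiv.toAddMonoidHom

/-- `deg2` as a group homomorphism. -/
def deg2Hom : Idx →+ ℤ := (AddMonoidHom.snd _ _).comp idxAddEquiv.toAddMonoidHom

@[simp] lemma par_L (m : ℤ) : par (.L m) = 0 := rfl

@[simp] lemma par_T (k : ℤ) : par (.T k) = 0 := rfl

@[simp] lemma par_G (n : ℤ) : par (.G n) = 1 := rfl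

lemma deg2_L (m : ℤ) : deg2 (.L m) = 2 * m := rfl

lemma deg2_T (k : ℤ) : deg2 (.T k) = 2 * k + 1 := rfl

lemma deg2_G (n : ℤ) : deg2 (.G n) = n := rfl

lemma par_add (i j : Idx) : par (i + j) = par i + par j := map_add parHom i j

lemma par_sub (i j : Idx) : par (i - j) = par i + par j :=
  (map_sub parHom i j).trans (CharTwo.sub_eq_add _ _)

lemma par_neg (i : Idx) : par (-i) = par i := (map_neg parHom i).trans (CharTwo.neg_eq _)

lemma par_zero : par 0 = 0 := map_zero parHom

lemma deg2_add (i j : Idx) : deg2 (i + j) = deg2 i + deg2 j := map_add deg2Hom i j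

lemma deg2_sub (i j : Idx) : deg2 (i - j) = deg2 i - deg2 j := map_sub deg2Hom i j

lemma deg2_neg (i : Idx) : deg2 (-i) = -deg2 i := map_neg deg2Hom i

lemma deg2_zero : deg2 0 = 0 := map_zero deg2Hom

lemma idx_ext {i j : Idx} (hpar : par i = par j) (hdeg : deg2 i = deg2 j) : i = j :=
  idxEquiv.injective (Prod.ext hpar hdeg)

lemma idx_cases {P : Idx → Prop} (hL : ∀ m, P (.L m)) (hT : ∀ k, P (.T k))
    (hG_even : ∀ a, P (.G (2 * a))) (hG_odd : ∀ a, P (.G (2 * a + 1))) (i : Idx) : P i := by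
  rcases i with m | k | n
  · exact hL m
  · exact hT k
  · rcases Int.even_or_odd' n with ⟨a, rfl | rfl⟩
    exacts [hG_even a, hG_odd a]

lemma L_add_L (m n : ℤ) : Idx.L m + .L n = .L (m + n) :=
  idx_ext (by simp [par_add]) (by simp only [deg2_add, deg2_L]; ring)

lemma L_add_T (m k : ℤ) : Idx.L m + .T k = .T (m + k) :=
  idx_ext (by simp [par_add]) (by simp only [deg2_add, deg2_L, deg2_T]; ring)

lemma T_add_L (k m : ℤ) : Idx.T k + .L m = .T (k + m) :=
  idx_ext (by simp [par_add]) (by simp only [deg2_add, deg2_L, deg2_T]; ring)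

lemma T_add_T (k l : ℤ) : Idx.T k + .T l = .L (k + l + 1) :=
  idx_ext (by simp [par_add]) (by simp only [deg2_add, deg2_L, deg2_T]; ring)

lemma L_add_G (m n : ℤ) : Idx.L m + .G n = .G (n + 2 * m) :=
  idx_ext (by simp [par_add]) (by simp only [deg2_add, deg2_L, deg2_G]; ring)

lemma G_add_L (n m : ℤ) : Idx.G n + .L m = .G (n + 2 * m) :=
  idx_ext (by simp [par_add]) (by simp only [deg2_add, deg2_L, deg2_G])

lemma T_add_G (k n : ℤ) : Idx.T k + .G n = .G (n + 2 * k + 1) :=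
  idx_ext (by simp [par_add]) (by simp only [deg2_add, deg2_T, deg2_G]; ring)

lemma G_add_T (n k : ℤ) : Idx.G n + .T k = .G (n + 2 * k + 1) :=
  idx_ext (by simp [par_add]) (by simp only [deg2_add, deg2_T, deg2_G]; ring)

lemma G_add_G_of_add_eq {n m k : ℤ} (h : n + m = 2 * k) : Idx.G n + .G m = .L k :=
  idx_ext (by rw [par_add]; rfl) (by simp only [deg2_add, deg2_L, deg2_G]; linarith)

lemma G_add_G_of_add_eq_add_one {n m k : ℤ} (h : n + m = 2 * k + 1) : Idx.G n + .G m = .T k :=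
  idx_ext (by rw [par_add]; rfl) (by simp only [deg2_add, deg2_T, deg2_G]; linarith)

end Grading

section StructureConstants

lemma sgn_zero : sgn 0 = 1 := if_pos rfl

lemma sgn_one : sgn 1 = -1 := if_neg one_ne_zero

lemma sgn_add (p q : ZMod 2) : sgn (p + q) = sgn p * sgn q := by
  obtain rfl | rfl := zmod_two_eq_zero_or_one p
  · rw [zero_add, sgn_zero, one_mul]
  · obtain rfl | rfl := zmod_two_eq_zero_or_one q
    · rw [add_zero, sgn_zero, mul_one]
    · rw [CharTwo.add_self_eq_zero, sgn_zero, sgn_one, neg_one_mul, neg_neg]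

lemma sgn_mul_self (p : ZMod 2) : sgn p * sgn p = 1 := by
  rw [← sgn_add, CharTwo.add_self_eq_zero, sgn_zero]

/-- The structure constants: `[e i, e j] = str i j • e (i + j)`, see `bk_eq`. -/
def str (i j : Idx) : ℂ := bk i j (i + j)

lemma bk_eq (i j : Idx) : bk i j = str i j • e (i + j) := by
  have key : ∃ c : ℂ, bk i j = c • e (i + j) := by
    rcases i with m | k | n <;> rcases j with m' | k' | n'
    · exact ⟨_, by rw [L_add_L]; rfl⟩
    · exact ⟨_, by rw [L_add_T, add_comm m]; rfl⟩
    · exact ⟨_, by rw [L_add_G]; rfl⟩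
    · exact ⟨_, by rw [T_add_L]; rfl⟩
    · exact ⟨0, (zero_smul _ _).symm⟩
    · exact ⟨1, by rw [T_add_G, one_smul]; rfl⟩
    · exact ⟨_, by rw [G_add_L]; rfl⟩
    · exact ⟨-1, by rw [G_add_T, neg_one_smul]; rfl⟩
    · by_cases h : (n + n') % 2 = 0
      · rw [G_add_G_of_add_eq (k := (n + n') / 2) (by omega), bk, if_pos h]
        exact ⟨_, rfl⟩
      · rw [G_add_G_of_add_eq_add_one (k := (n + n' - 1) / 2) (by omega), bk, if_neg h]
        exact ⟨_, rfl⟩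
  obtain ⟨c, hc⟩ := key
  rw [str, hc]
  simp [e]

lemma str_eq_of_bk_eq {i j k : Idx} {c : ℂ} (h : bk i j = c • e k) (hk : i + j = k) :
    str i j = c := by
  rw [str, h, hk]
  simp [e]

lemma neg_one_zpow_two_mul (a : ℤ) : (-1 : ℂ) ^ (2 * a) = 1 := (even_two_mul a).neg_one_zpow

lemma neg_one_zpow_two_mul_add_one (a : ℤ) : (-1 : ℂ) ^ (2 * a + 1) = -1 :=
  (odd_two_mul_add_one a).neg_one_zpow

@[simp] lemma str_L_L (m n : ℤ) : str (.L m) (.L n) = m - n :=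
  str_eq_of_bk_eq rfl (L_add_L m n)

@[simp] lemma str_L_T (m k : ℤ) : str (.L m) (.T k) = -(k + 1 / 2) :=
  str_eq_of_bk_eq rfl ((L_add_T m k).trans (by rw [add_comm]))

@[simp] lemma str_T_L (k m : ℤ) : str (.T k) (.L m) = k + 1 / 2 :=
  str_eq_of_bk_eq rfl (T_add_L k m)

@[simp] lemma str_T_T (k l : ℤ) : str (.T k) (.T l) = 0 := rfl

@[simp] lemma str_L_G (m n : ℤ) : str (.L m) (.G n) = (m - n) / 2 :=
  str_eq_of_bk_eq rfl (L_add_G m n)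

@[simp] lemma str_G_L (n m : ℤ) : str (.G n) (.L m) = -(m - n) / 2 :=
  str_eq_of_bk_eq rfl (G_add_L n m)

@[simp] lemma str_T_G (k n : ℤ) : str (.T k) (.G n) = 1 :=
  str_eq_of_bk_eq (one_smul ℂ _).symm (T_add_G k n)

@[simp] lemma str_G_T (n k : ℤ) : str (.G n) (.T k) = -1 :=
  str_eq_of_bk_eq (neg_one_smul ℂ _).symm (G_add_T n k)

lemma str_G_even_G_even (a b : ℤ) : str (.G (2 * a)) (.G (2 * b)) = 2 := by
  refine str_eq_of_bk_eq (k := .L (a + b)) ?_ (G_add_G_of_add_eq (by ring))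
  rw [bk, if_pos (by omega), neg_one_zpow_two_mul, one_mul, ← mul_add,
    Int.mul_ediv_cancel_left _ two_ne_zero]

lemma str_G_odd_G_odd (a b : ℤ) : str (.G (2 * a + 1)) (.G (2 * b + 1)) = -2 := by
  refine str_eq_of_bk_eq (k := .L (a + b + 1)) ?_ (G_add_G_of_add_eq (by ring))
  rw [bk, if_pos (by omega), neg_one_zpow_two_mul_add_one, neg_one_mul,
    show (2 * a + 1 + (2 * b + 1)) / 2 = a + b + 1 by omega]

lemma str_G_even_G_odd (a b : ℤ) : str (.G (2 * a)) (.G (2 * b + 1)) = b - a + 1 / 2 := by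
  refine str_eq_of_bk_eq (k := .T (a + b)) ?_ (G_add_G_of_add_eq_add_one (by ring))
  rw [bk, if_neg (by omega), neg_one_zpow_two_mul_add_one,
    show (2 * a + (2 * b + 1) - 1) / 2 = a + b by omega]
  congr 1; push_cast; ring

lemma str_G_odd_G_even (a b : ℤ) : str (.G (2 * a + 1)) (.G (2 * b)) = a - b + 1 / 2 := by
  refine str_eq_of_bk_eq (k := .T (a + b)) ?_ (G_add_G_of_add_eq_add_one (by ring))
  rw [bk, if_neg (by omega), show 2 * a + 1 + 1 = 2 * (a + 1) by ring, neg_one_zpow_two_mul,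
    show (2 * a + 1 + 2 * b - 1) / 2 = a + b by omega]
  congr 1; push_cast; ring

lemma str_swap (i j : Idx) : str j i = -sgn (par i * par j) * str i j := by
  induction i using idx_cases <;> induction j using idx_cases <;>
    simp only [str_L_L, str_L_T, str_T_L, str_T_T, str_L_G, str_G_L, str_T_G, str_G_T,
      str_G_even_G_even, str_G_odd_G_odd, str_G_even_G_odd, str_G_odd_G_even,
      par_L, par_T, par_G, mul_zero, mul_one, sgn_zero, sgn_one] <;>
    ring

lemma str_jacobi (i j k : Idx) :
    str i j * str (i + j) k
      = str j k * str i (j + k) - sgn (par i * par j) * (str i k * str j (i + k)) := by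
  have L_add_G_odd (m a : ℤ) : Idx.L m + .G (2 * a + 1) = .G (2 * (m + a) + 1) := by
    rw [L_add_G]; congr 1; ring
  have G_odd_add_L (m a : ℤ) : Idx.G (2 * a + 1) + .L m = .G (2 * (a + m) + 1) := by
    rw [G_add_L]; congr 1; ring
  have T_add_G_odd (k a : ℤ) : Idx.T k + .G (2 * a + 1) = .G (2 * (k + a + 1)) := by
    rw [T_add_G]; congr 1; ring
  have G_odd_add_T (k a : ℤ) : Idx.G (2 * a + 1) + .T k = .G (2 * (a + k + 1)) := by
    rw [G_add_T]; congr 1; ring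
  have G_even_add_G_even (a b : ℤ) : Idx.G (2 * a) + .G (2 * b) = .L (a + b) :=
    G_add_G_of_add_eq (by ring)
  have G_odd_add_G_odd (a b : ℤ) : Idx.G (2 * a + 1) + .G (2 * b + 1) = .L (a + b + 1) :=
    G_add_G_of_add_eq (by ring)
  have G_even_add_G_odd (a b : ℤ) : Idx.G (2 * a) + .G (2 * b + 1) = .T (a + b) :=
    G_add_G_of_add_eq_add_one (by ring)
  have G_odd_add_G_even (a b : ℤ) : Idx.G (2 * a + 1) + .G (2 * b) = .T (a + b) :=
    G_add_G_of_add_eq_add_one (by ring)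
  induction i using idx_cases <;> induction j using idx_cases <;> induction k using idx_cases <;>
    simp only [str_L_L, str_L_T, str_T_L, str_T_T, str_L_G, str_G_L, str_T_G, str_G_T,
      str_G_even_G_even, str_G_odd_G_odd, str_G_even_G_odd, str_G_odd_G_even,
      L_add_L, L_add_T, T_add_L, T_add_T, L_add_G_odd, G_odd_add_L, T_add_G_odd, G_odd_add_T,
      L_add_G, G_add_L, T_add_G, G_add_T, ← mul_add,
      G_even_add_G_even, G_odd_add_G_odd, G_even_add_G_odd, G_odd_add_G_even,
      par_L, par_T, par_G, mul_zero, zero_mul, mul_one, sgn_zero, sgn_one, Int.cast_add,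
      Int.cast_mul, Int.cast_ofNat, Int.cast_one] <;>
    ring

end StructureConstants

section LinearExtension

variable {κ M : Type*} [AddCommMonoid M] [Module ℂ M]

lemma map_eq_sum (f : (κ →₀ ℂ) →ₗ[ℂ] M) (v : κ →₀ ℂ) :
    f v = v.sum fun p c => c • f (.single p 1) := by
  conv_lhs => rw [← Finsupp.sum_single v, map_finsuppSum]
  refine Finsupp.sum_congr fun p _ => ?_
  rw [← map_smul, Finsupp.smul_single_one]

lemma map_eq_of_forall_mem_support {f g : (κ →₀ ℂ) →ₗ[ℂ] M} {v : κ →₀ ℂ}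
    (h : ∀ p ∈ v.support, f (.single p 1) = g (.single p 1)) : f v = g v := by
  rw [map_eq_sum f, map_eq_sum g]
  exact Finsupp.sum_congr fun p hp => by rw [h p hp]

lemma map_eq_of_forall_single {f g : (κ →₀ ℂ) →ₗ[ℂ] M}
    (h : ∀ p, f (.single p 1) = g (.single p 1)) (v : κ →₀ ℂ) : f v = g v :=
  map_eq_of_forall_mem_support fun p _ => h p

lemma bilin_eq_sum {κ' : Type*} (F : (κ →₀ ℂ) →ₗ[ℂ] (κ' →₀ ℂ) →ₗ[ℂ] M) (u : κ →₀ ℂ)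
    (v : κ' →₀ ℂ) :
    F u v = u.sum fun p a => v.sum fun q b => (a * b) • F (.single p 1) (.single q 1) := by
  rw [← LinearMap.flip_apply, map_eq_sum]
  refine Finsupp.sum_congr fun p _ => ?_
  rw [LinearMap.flip_apply, map_eq_sum, Finsupp.smul_sum]
  simp only [smul_smul]

@[simp] lemma ofBasis_e (g : Idx → M) (i : Idx) : ofBasis g (e i) = g i := by
  simp [ofBasis, e]

end LinearExtension

section Operators

/-- The action of the basis element `e i` on `𝓛 ⊗ 𝓛`. -/
def adV (i : Idx) : V →ₗ[ℂ] V :=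
  Finsupp.linearCombination ℂ fun p =>
    str i p.1 • .single (i + p.1, p.2) 1
      + (sgn (par i * par p.1) * str i p.2) • .single (p.1, i + p.2) 1

/-- The action of the basis element `e i` on `𝓛 ⊗ 𝓛 ⊗ 𝓛`. -/
def adW (i : Idx) : W →ₗ[ℂ] W :=
  Finsupp.linearCombination ℂ fun p =>
    str i p.1 • .single (i + p.1, p.2.1, p.2.2) 1
      + (sgn (par i * par p.1) * str i p.2.1) • .single (p.1, i + p.2.1, p.2.2) 1
      + (sgn (par i * (par p.1 + par p.2.1)) * str i p.2.2) • .single (p.1, p.2.1, i + p.2.2) 1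

lemma adV_single (i a b : Idx) :
    adV i (.single (a, b) 1) = str i a • .single (i + a, b) 1
      + (sgn (par i * par a) * str i b) • .single (a, i + b) 1 := by
  simp [adV]

lemma adW_single (i a b c : Idx) :
    adW i (.single (a, b, c) 1) = str i a • .single (i + a, b, c) 1
      + (sgn (par i * par a) * str i b) • .single (a, i + b, c) 1
      + (sgn (par i * (par a + par b)) * str i c) • .single (a, b, i + c) 1 := by
  simp [adW]

lemma bk_sum {κ : Type*} (i j : Idx) (f : Idx → κ) :
    ((bk i j).sum fun k t => Finsupp.single (f k) t) = str i j • .single (f (i + j)) (1 : ℂ) := by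
  simp [bk_eq, e]

lemma act2_eq_ofBasis (x : Lsa) (v : V) : act2 x v = ofBasis adV x v := by
  rw [bilin_eq_sum]
  refine Finsupp.sum_congr fun i _ => Finsupp.sum_congr fun p _ => ?_
  change _ = (_ * _) • ofBasis adV (e i) _
  rw [ofBasis_e, adV_single, bk_sum, bk_sum i p.2, smul_smul]

@[simp] lemma act2_e (i : Idx) (v : V) : act2 (e i) v = adV i v := by
  rw [act2_eq_ofBasis, ofBasis_e]

lemma adV_apply (i : Idx) (v : V) (a b : Idx) :
    adV i v (a, b) = str i (a - i) * v (a - i, b)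
      + sgn (par i * par a) * str i (b - i) * v (a, b - i) := by
  induction v using Finsupp.induction_linear with
  | zero => simp
  | add u v hu hv => rw [map_add, Finsupp.add_apply, hu, hv]; simp only [Finsupp.add_apply]; ring
  | single p c =>
    obtain ⟨a', b'⟩ := p
    rw [← Finsupp.smul_single_one, map_smul, adV_single]
    simp only [Finsupp.smul_apply, Finsupp.add_apply, Finsupp.single_apply, Prod.mk.injEq,
      smul_eq_mul, ← eq_sub_iff_add_eq']
    grind

lemma adV_apply_of_add {i a b a' b' : Idx} (v : V) (ha : i + a' = a) (hb : i + b' = b) :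
    adV i v (a, b) = str i a' * v (a', b) + sgn (par i * par a) * str i b' * v (a, b') := by
  rw [adV_apply, ← ha, ← hb, add_sub_cancel_left, add_sub_cancel_left]

lemma adW_apply (i : Idx) (w : W) (a b c : Idx) :
    adW i w (a, b, c) = str i (a - i) * w (a - i, b, c)
      + sgn (par i * par a) * str i (b - i) * w (a, b - i, c)
      + sgn (par i * (par a + par b)) * str i (c - i) * w (a, b, c - i) := by
  induction w using Finsupp.induction_linear with
  | zero => simp
  | add u v hu hv => rw [map_add, Finsupp.add_apply, hu, hv]; simp only [Finsupp.add_apply]; ring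
  | single p c =>
    obtain ⟨a', b', c'⟩ := p
    rw [← Finsupp.smul_single_one, map_smul, adW_single]
    simp only [Finsupp.smul_apply, Finsupp.add_apply, Finsupp.single_apply, Prod.mk.injEq,
      smul_eq_mul, ← eq_sub_iff_add_eq']
    grind

lemma adV_add_smul (i j : Idx) (v : V) :
    str i j • adV (i + j) v = adV i (adV j v) - sgn (par i * par j) • adV j (adV i v) := by
  refine map_eq_of_forall_single (f := str i j • adV (i + j))
    (g := adV i ∘ₗ adV j - sgn (par i * par j) • adV j ∘ₗ adV i) (fun ⟨a, b⟩ => ?_) v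
  simp only [LinearMap.smul_apply, LinearMap.sub_apply, LinearMap.comp_apply, adV_single, map_add,
    map_smul, par_add, add_assoc, add_left_comm j i]
  obtain hi | hi := zmod_two_eq_zero_or_one (par i) <;>
  obtain hj | hj := zmod_two_eq_zero_or_one (par j) <;>
  obtain ha | ha := zmod_two_eq_zero_or_one (par a) <;>
  · simp only [hi, hj, ha, mul_zero, mul_one, add_zero, zero_add, sgn_zero, sgn_one,
      CharTwo.add_self_eq_zero, smul_add, smul_smul, one_mul, neg_one_mul, mul_neg, str_jacobi]
    module

end Operators

section YangBaxter

/-- The super-twist `tau` as a linear map. -/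
def tauHom : V →ₗ[ℂ] V :=
  Finsupp.linearCombination ℂ fun p => sgn (par p.1 * par p.2) • .single (p.2, p.1) 1

/-- The super-cyclic map `xi` as a linear map. -/
def xiHom : W →ₗ[ℂ] W :=
  Finsupp.linearCombination ℂ fun p =>
    sgn (par p.1 * (par p.2.1 + par p.2.2)) • .single (p.2.1, p.2.2, p.1) 1

/-- The super-twist `1 ⊗ τ` of the last two tensor factors. -/
def tau23 : W →ₗ[ℂ] W :=
  Finsupp.linearCombination ℂ fun p =>
    sgn (par p.2.1 * par p.2.2) • .single (p.1, p.2.2, p.2.1) 1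

/-- The cyclic sum `1 + ξ + ξ²`. -/
def cycSum : W →ₗ[ℂ] W := LinearMap.id + xiHom + xiHom ∘ₗ xiHom

/-- The bracket `[u¹², v²³]` of `u, v ∈ 𝓛 ⊗ 𝓛`, contracting the two middle factors. -/
def mid : V →ₗ[ℂ] V →ₗ[ℂ] W :=
  Finsupp.linearCombination ℂ fun p => Finsupp.linearCombination ℂ fun q =>
    str p.2 q.1 • .single (p.1, p.2 + q.1, q.2) 1

lemma tauHom_single (a b : Idx) :
    tauHom (.single (a, b) 1) = sgn (par a * par b) • .single (b, a) 1 := by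
  simp [tauHom]

lemma xiHom_single (a b c : Idx) :
    xiHom (.single (a, b, c) 1) = sgn (par a * (par b + par c)) • .single (b, c, a) 1 := by
  simp [xiHom]

lemma tau23_single (a b c : Idx) :
    tau23 (.single (a, b, c) 1) = sgn (par b * par c) • .single (a, c, b) 1 := by
  simp [tau23]

lemma mid_single (a b c d : Idx) :
    mid (.single (a, b) 1) (.single (c, d) 1) = str b c • .single (a, b + c, d) 1 := by
  simp [mid]

lemma tau_eq (v : V) : tau v = tauHom v := by
  rw [map_eq_sum]
  refine Finsupp.sum_congr fun p _ => ?_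
  rw [tauHom_single, smul_smul, mul_comm]

lemma xi_eq (w : W) : xi w = xiHom w := by
  rw [map_eq_sum]
  refine Finsupp.sum_congr fun p _ => ?_
  rw [xiHom_single, smul_smul, mul_comm]

lemma tauHom_tauHom (v : V) : tauHom (tauHom v) = v := by
  refine map_eq_of_forall_single (f := tauHom ∘ₗ tauHom) (g := LinearMap.id) (fun ⟨a, b⟩ => ?_) v
  simp only [LinearMap.comp_apply, LinearMap.id_apply, tauHom_single, map_smul, smul_smul,
    mul_comm (par b), sgn_mul_self, one_smul]

lemma xiHom_xiHom_xiHom (w : W) : xiHom (xiHom (xiHom w)) = w := by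
  refine map_eq_of_forall_single (f := xiHom ∘ₗ xiHom ∘ₗ xiHom) (g := LinearMap.id)
    (fun ⟨a, b, c⟩ => ?_) w
  simp only [LinearMap.comp_apply, LinearMap.id_apply, xiHom_single, map_smul, smul_smul,
    ← sgn_add]
  rw [show par a * (par b + par c) + par b * (par c + par a) + par c * (par a + par b)
    = par a * par b + par b * par c + par a * par c
      + (par a * par b + par b * par c + par a * par c) by ring,
    CharTwo.add_self_eq_zero, sgn_zero, one_smul]

lemma cycSum_xiHom (w : W) : cycSum (xiHom w) = cycSum w := by
  simp only [cycSum, LinearMap.add_apply, LinearMap.comp_apply, LinearMap.id_apply,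
    xiHom_xiHom_xiHom]
  abel

lemma tau23_xiHom (w : W) : tau23 (xiHom w) = xiHom (xiHom (tau23 w)) := by
  refine map_eq_of_forall_single (f := tau23 ∘ₗ xiHom) (g := xiHom ∘ₗ xiHom ∘ₗ tau23)
    (fun ⟨a, b, c⟩ => ?_) w
  simp only [LinearMap.comp_apply, xiHom_single, tau23_single, map_smul, smul_smul, ← sgn_add]
  congr 2
  linear_combination (-(par b * par c)) * CharTwo.two_eq_zero (R := ZMod 2)

lemma tauHom_adV (i : Idx) (v : V) : tauHom (adV i v) = adV i (tauHom v) := by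
  refine map_eq_of_forall_single (f := tauHom ∘ₗ adV i) (g := adV i ∘ₗ tauHom)
    (fun ⟨a, b⟩ => ?_) v
  simp only [LinearMap.comp_apply, adV_single, tauHom_single, map_add, map_smul, smul_add,
    smul_smul, par_add]
  obtain hi | hi := zmod_two_eq_zero_or_one (par i) <;>
  obtain ha | ha := zmod_two_eq_zero_or_one (par a) <;>
  obtain hb | hb := zmod_two_eq_zero_or_one (par b) <;>
  · simp only [hi, ha, hb, mul_zero, mul_one, add_zero, zero_add, sgn_zero, sgn_one,
      CharTwo.add_self_eq_zero]
    module

lemma xiHom_adW (i : Idx) (w : W) : xiHom (adW i w) = adW i (xiHom w) := by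
  refine map_eq_of_forall_single (f := xiHom ∘ₗ adW i) (g := adW i ∘ₗ xiHom)
    (fun ⟨a, b, c⟩ => ?_) w
  simp only [LinearMap.comp_apply, adW_single, xiHom_single, map_add, map_smul, smul_add,
    smul_smul, par_add]
  obtain hi | hi := zmod_two_eq_zero_or_one (par i) <;>
  obtain ha | ha := zmod_two_eq_zero_or_one (par a) <;>
  obtain hb | hb := zmod_two_eq_zero_or_one (par b) <;>
  obtain hc | hc := zmod_two_eq_zero_or_one (par c) <;>
  · simp only [hi, ha, hb, hc, mul_zero, mul_one, add_zero, zero_add, sgn_zero, sgn_one,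
      CharTwo.add_self_eq_zero]
    module

lemma cycSum_adW (i : Idx) (w : W) : cycSum (adW i w) = adW i (cycSum w) := by
  simp only [cycSum, LinearMap.add_apply, LinearMap.comp_apply, LinearMap.id_apply, xiHom_adW,
    map_add]

lemma IsEvenV.par_eq {v : V} (hv : IsEvenV v) {a b : Idx} (hab : (a, b) ∈ v.support) :
    par a = par b :=
  CharTwo.add_eq_zero.1 (hv _ hab)

lemma adW_mid {u : V} (hu : IsEvenV u) (i : Idx) (v : V) :
    adW i (mid u v) = mid (adV i u) v + mid u (adV i v) := by
  refine map_eq_of_forall_mem_support (v := u) (f := adW i ∘ₗ mid.flip v)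
    (g := mid.flip v ∘ₗ adV i + mid.flip (adV i v)) fun ⟨a, b⟩ hab => ?_
  have hpar := hu.par_eq hab
  refine map_eq_of_forall_single (f := adW i ∘ₗ mid (.single (a, b) 1))
    (g := mid (adV i (.single (a, b) 1)) + mid (.single (a, b) 1) ∘ₗ adV i) (fun ⟨c, d⟩ => ?_) v
  simp only [LinearMap.comp_apply, LinearMap.add_apply, LinearMap.smul_apply, adV_single,
    adW_single, mid_single, map_add, map_smul, smul_add, smul_smul, par_add, hpar, add_assoc,
    add_left_comm b i]
  obtain hi | hi := zmod_two_eq_zero_or_one (par i) <;>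
  obtain hb | hb := zmod_two_eq_zero_or_one (par b) <;>
  obtain hc | hc := zmod_two_eq_zero_or_one (par c) <;>
  · simp only [hi, hb, hc, mul_zero, mul_one, add_zero, zero_add, sgn_zero, sgn_one,
      CharTwo.add_self_eq_zero, one_mul, neg_mul, mul_comm (str b c), str_jacobi]
    module

lemma xiHom_tau23_mid {v : V} (hv : IsEvenV v) (u : V) :
    xiHom (tau23 (mid u v)) = -mid (tauHom v) (tauHom u) := by
  refine map_eq_of_forall_mem_support (v := v) (f := xiHom ∘ₗ tau23 ∘ₗ mid u)
    (g := -(mid.flip (tauHom u) ∘ₗ tauHom)) fun ⟨c, d⟩ hcd => ?_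
  have hpar := hv.par_eq hcd
  refine map_eq_of_forall_single (f := xiHom ∘ₗ tau23 ∘ₗ mid.flip (.single (c, d) 1))
    (g := -(mid (tauHom (.single (c, d) 1)) ∘ₗ tauHom)) (fun ⟨a, b⟩ => ?_) u
  simp only [LinearMap.comp_apply, LinearMap.neg_apply, LinearMap.flip_apply, LinearMap.smul_apply,
    tauHom_single, xiHom_single, tau23_single, mid_single, map_smul, smul_smul, par_add, hpar,
    str_swap b c, add_comm c b]
  obtain ha | ha := zmod_two_eq_zero_or_one (par a) <;>
  obtain hb | hb := zmod_two_eq_zero_or_one (par b) <;>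
  obtain hd | hd := zmod_two_eq_zero_or_one (par d) <;>
  · simp only [ha, hb, hd, mul_zero, mul_one, add_zero, zero_add, sgn_zero, sgn_one,
      CharTwo.add_self_eq_zero]
    module

lemma oneTensorMap_eq {D : Lsa → V} {r : V} (hD : ∀ i, D (e i) = adV i r) (u : V) :
    oneTensorMap D u = mid u r + tau23 (mid u (tauHom r)) := by
  change _ = (mid.flip r + tau23 ∘ₗ mid.flip (tauHom r)) u
  rw [map_eq_sum]
  refine Finsupp.sum_congr fun ⟨a, b⟩ _ => congrArg _ ?_
  change Finsupp.mapDomain (Prod.mk a) (D (e b)) = _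
  rw [hD]
  refine map_eq_of_forall_single (f := Finsupp.lmapDomain ℂ ℂ (Prod.mk a) ∘ₗ adV b)
    (g := mid (.single (a, b) 1) + tau23 ∘ₗ mid (.single (a, b) 1) ∘ₗ tauHom) (fun ⟨c, d⟩ => ?_) r
  simp only [LinearMap.comp_apply, LinearMap.add_apply, adV_single, map_add, map_smul,
    Finsupp.lmapDomain_apply, Finsupp.mapDomain_single, mid_single, tauHom_single, tau23_single,
    smul_smul, par_add]
  obtain hb | hb := zmod_two_eq_zero_or_one (par b) <;>
  obtain hc | hc := zmod_two_eq_zero_or_one (par c) <;>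
  obtain hd | hd := zmod_two_eq_zero_or_one (par d) <;>
  simp only [hb, hc, hd, mul_zero, mul_one, add_zero, zero_add, sgn_zero, sgn_one,
    CharTwo.add_self_eq_zero] <;>
  module

lemma cYB_eq (r : V) :
    cYB r = mid r r + tau23 (mid r (tauHom r)) + tau23 (xiHom (mid (tauHom r) r)) := by
  change _ = (mid + (mid.compl₂ tauHom).compr₂ tau23
    + (mid ∘ₗ tauHom).compr₂ (tau23 ∘ₗ xiHom)) r r
  rw [bilin_eq_sum]
  refine Finsupp.sum_congr fun ⟨a, b⟩ _ => Finsupp.sum_congr fun ⟨c, d⟩ _ => congrArg _ ?_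
  simp only [LinearMap.add_apply, LinearMap.compr₂_apply, LinearMap.compl₂_apply,
    LinearMap.comp_apply, LinearMap.smul_apply, tauHom_single, map_smul, mid_single, xiHom_single,
    tau23_single, bk_sum, smul_smul, par_add]
  obtain ha | ha := zmod_two_eq_zero_or_one (par a) <;>
  obtain hb | hb := zmod_two_eq_zero_or_one (par b) <;>
  obtain hc | hc := zmod_two_eq_zero_or_one (par c) <;>
  obtain hd | hd := zmod_two_eq_zero_or_one (par d) <;>
  · simp only [ha, hb, hc, hd, mul_zero, mul_one, add_zero, zero_add, sgn_zero, sgn_one,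
      CharTwo.add_self_eq_zero]
    module

lemma cYB_eq_cycSum {r : V} (hr : IsEvenV r) (hskew : tauHom r = -r) :
    cYB r = cycSum (mid r r) := by
  have htau : tau23 (mid r r) = -xiHom (xiHom (mid r r)) := by
    rw [← xiHom_xiHom_xiHom (tau23 (mid r r)), xiHom_tau23_mid hr, hskew]
    simp only [map_neg, LinearMap.neg_apply, neg_neg]
  rw [cYB_eq, hskew, tau23_xiHom]
  simp only [map_neg, LinearMap.neg_apply, htau, xiHom_xiHom_xiHom, neg_neg, cycSum,
    LinearMap.add_apply, LinearMap.comp_apply, LinearMap.id_apply]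
  abel

lemma cycSum_oneTensorMap {D : Lsa → V} {r : V} (hD : ∀ i, D (e i) = adV i r) (hr : IsEvenV r)
    (hskew : tauHom r = -r) (i : Idx) :
    cycSum (oneTensorMap D (adV i r)) = adW i (cYB r) :=
  calc cycSum (oneTensorMap D (adV i r))
      = cycSum (mid (adV i r) r) - cycSum (xiHom (tau23 (mid (adV i r) r))) := by
        rw [oneTensorMap_eq hD, hskew, cycSum_xiHom]
        simp only [map_neg, map_add, sub_eq_add_neg]
    _ = cycSum (mid (adV i r) r + mid r (adV i r)) := by
        rw [xiHom_tau23_mid hr, tauHom_adV, hskew]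
        simp only [map_neg, map_add, LinearMap.neg_apply, neg_neg, sub_neg_eq_add]
    _ = adW i (cYB r) := by rw [← adW_mid hr, cycSum_adW, cYB_eq_cycSum hr hskew]

lemma mem_ImOneSubTau_of_tauHom_eq_neg {r : V} (hr : tauHom r = -r) : r ∈ ImOneSubTau := by
  refine ⟨(1 / 2 : ℂ) • r, ?_⟩
  change _ - tau _ = r
  rw [tau_eq, map_smul, hr]
  module

end YangBaxter

section Invariants

lemma subsingleton_setOf_str_L_eq_zero (a : Idx) : {N : ℤ | str (.L N) a = 0}.Subsingleton := by
  intro N hN N' hN'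
  rcases a with m | k | n
  · simp only [Set.mem_ofPred_eq, str_L_L, sub_eq_zero, Int.cast_inj] at hN hN'
    rw [hN, hN']
  · have h : (2 * k + 1 : ℂ) = 0 := by
      simp only [Set.mem_ofPred_eq, str_L_T] at hN
      linear_combination -2 * hN
    norm_cast at h
    omega
  · simp only [Set.mem_ofPred_eq, str_L_G, div_eq_zero_iff, sub_eq_zero, Int.cast_inj,
      two_ne_zero, or_false] at hN hN'
    rw [hN, hN']

/-- For large `N` the indices `L N + a` leave the first projection of the support of `v`. -/
lemma eq_zero_of_str_L_mul_eq_zero {κ : Type*} {v : Idx × κ →₀ ℂ}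
    (h : ∀ N a k, (∀ k', v (.L N + a, k') = 0) → str (.L N) a * v (a, k) = 0) : v = 0 := by
  ext ⟨a, k⟩
  have hfin : {N : ℤ | .L N + a ∈ Prod.fst '' (v.support : Set (Idx × κ))}.Finite := by
    refine Set.Finite.preimage (fun N _ N' _ hNN' => ?_) (v.support.finite_toSet.image _)
    simpa using hNN'
  obtain ⟨N, hN⟩ := (hfin.union (subsingleton_setOf_str_L_eq_zero a).finite).exists_notMem
  rw [Set.mem_union, not_or] at hN
  refine (mul_eq_zero.1 (h N a k fun k' => ?_)).resolve_left hN.2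
  by_contra hk'
  exact hN.1 ⟨_, Finsupp.mem_support_iff.2 hk', rfl⟩

lemma eq_zero_of_adV_L_eq_zero {v : V} (h : ∀ N, adV (.L N) v = 0) : v = 0 := by
  refine eq_zero_of_str_L_mul_eq_zero fun N a b hv => ?_
  have hab := DFunLike.congr_fun (h N) (.L N + a, b)
  rw [adV_apply, add_sub_cancel_left, hv, mul_zero, add_zero] at hab
  exact hab

lemma eq_zero_of_adW_L_eq_zero {w : W} (h : ∀ N, adW (.L N) w = 0) : w = 0 := by
  refine eq_zero_of_str_L_mul_eq_zero fun N a ⟨b, c⟩ hw => ?_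
  have habc := DFunLike.congr_fun (h N) (.L N + a, b, c)
  rw [adW_apply, add_sub_cancel_left, hw, hw, mul_zero, mul_zero, add_zero, add_zero] at habc
  exact habc

end Invariants

section Derivations

lemma mem_support_of_mem_support_adV {i a b : Idx} {v : V} (h : (a, b) ∈ (adV i v).support) :
    (a - i, b) ∈ v.support ∨ (a, b - i) ∈ v.support := by
  simp only [Finsupp.mem_support_iff] at h ⊢
  by_contra! hv
  exact h (by rw [adV_apply, hv.1, hv.2, mul_zero, mul_zero, add_zero])

lemma IsParityV.adV {ε : ZMod 2} {v : V} (hv : IsParityV ε v) (i : Idx) :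
    IsParityV (par i + ε) (adV i v) := by
  rintro ⟨a, b⟩ hab
  rcases mem_support_of_mem_support_adV hab with h | h
  · rw [← hv _ h, par_sub]
    linear_combination -(par i) * CharTwo.two_eq_zero (R := ZMod 2)
  · rw [← hv _ h, par_sub]
    linear_combination -(par i) * CharTwo.two_eq_zero (R := ZMod 2)

lemma IsParityV.smul {ε : ZMod 2} {v : V} (hv : IsParityV ε v) (c : ℂ) : IsParityV ε (c • v) :=
  fun p hp => hv p (Finsupp.support_smul hp)

lemma IsParityV.add {ε : ZMod 2} {u v : V} (hu : IsParityV ε u) (hv : IsParityV ε v) :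
    IsParityV ε (u + v) := fun p hp =>
  (Finset.mem_union.1 (Finsupp.support_add hp)).elim (hu p) (hv p)

lemma IsParityV.sub {ε : ZMod 2} {u v : V} (hu : IsParityV ε u) (hv : IsParityV ε v) :
    IsParityV ε (u - v) := fun p hp =>
  (Finset.mem_union.1 (Finsupp.support_sub hp)).elim (hu p) (hv p)

lemma innMap_e (ε : ZMod 2) (r : V) (i : Idx) :
    innMap ε r (e i) = sgn (ε * par i) • adV i r := by
  rw [innMap, ofBasis_e, act2_e]

lemma innMap_zero_e (r : V) (i : Idx) : innMap 0 r (e i) = adV i r := by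
  rw [innMap_e, zero_mul, sgn_zero, one_smul]

lemma lsa_hom_ext {M : Type*} [AddCommMonoid M] [Module ℂ M] {f g : Lsa →ₗ[ℂ] M}
    (h : ∀ i, f (e i) = g (e i)) : f = g :=
  LinearMap.ext (map_eq_of_forall_single h)

lemma innMap_add (ε : ZMod 2) (r s : V) : innMap ε (r + s) = innMap ε r + innMap ε s :=
  lsa_hom_ext fun i => by rw [LinearMap.add_apply, innMap_e, innMap_e, innMap_e, map_add, smul_add]

lemma IsParityV.isDerOfParity_innMap {ε : ZMod 2} {r : V} (hr : IsParityV ε r) :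
    IsDerOfParity ε (innMap ε r) := by
  refine ⟨fun i => ?_, fun i j => ?_⟩
  · rw [innMap_e]
    exact (hr.adV i).smul _
  · rw [bk_eq, map_smul, innMap_e, innMap_e, innMap_e, act2_e, act2_e, smul_comm, adV_add_smul,
      map_smul, map_smul, par_add, mul_add, mul_add, sgn_add, sgn_add, mul_comm (par j) ε,
      mul_comm (par j) (par i)]
    module

namespace IsDerOfParity

lemma sub {ε : ZMod 2} {d d' : Lsa →ₗ[ℂ] V} (hd : IsDerOfParity ε d) (hd' : IsDerOfParity ε d') :
    IsDerOfParity ε (d - d') := by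
  refine ⟨fun i => (hd.1 i).sub (hd'.1 i), fun i j => ?_⟩
  simp only [LinearMap.sub_apply, hd.2 i j, hd'.2 i j, act2_e, map_sub]
  module

variable {d : Lsa →ₗ[ℂ] V} (hd : IsDerOfParity 0 d)
include hd

lemma parity (i : Idx) : IsParityV (par i) (d (e i)) := by
  simpa only [add_zero] using hd.1 i

lemma cocycle (i j : Idx) :
    str i j • d (e (i + j))
      = adV i (d (e j)) - sgn (par i * par j) • adV j (d (e i)) := by
  have h := hd.2 i j
  rwa [bk_eq, map_smul, act2_e, act2_e, zero_mul, sgn_zero, one_smul, zero_add,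
    mul_comm (par j)] at h

end IsDerOfParity

end Derivations

section Homogeneity

lemma L_zero : Idx.L 0 = 0 := idx_ext rfl rfl

lemma str_L_zero (a : Idx) : str (.L 0) a = -(deg2 a : ℂ) / 2 := by
  rcases a with m | k | n <;> simp only [str_L_L, str_L_T, str_L_G, deg2] <;> push_cast <;> ring

lemma adV_L_zero_apply (v : V) (a b : Idx) :
    adV (.L 0) v (a, b) = -((deg2 a + deg2 b : ℤ) : ℂ) / 2 * v (a, b) := by
  rw [L_zero, adV_apply_of_add v (zero_add a) (zero_add b), ← L_zero, str_L_zero, str_L_zero,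
    par_L, zero_mul, sgn_zero]
  push_cast
  ring

/-- `v` is homogeneous of index `i` for the grading of `𝓛 ⊗ 𝓛` by the group `Idx`, that is, for
parity and degree at once. -/
def IsHomogV (i : Idx) (v : V) : Prop := ∀ a b, a + b ≠ i → v (a, b) = 0

lemma IsHomogV.isParityV {i : Idx} {v : V} (hv : IsHomogV i v) : IsParityV (par i) v := by
  rintro ⟨a, b⟩ hab
  by_contra hne
  refine Finsupp.mem_support_iff.1 hab (hv a b fun h => hne ?_)
  rw [← par_add, h]

lemma IsHomogV.isEvenV {v : V} (hv : IsHomogV 0 v) : IsEvenV v :=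
  hv.isParityV

lemma IsHomogV.adV {j : Idx} {v : V} (hv : IsHomogV j v) (i : Idx) :
    IsHomogV (i + j) (adV i v) := by
  intro a b hab
  rw [adV_apply, hv, hv, mul_zero, mul_zero, add_zero]
  · rintro rfl
    exact hab (by abel)
  · rintro rfl
    exact hab (by abel)

lemma adV_L_zero_eq_zero {v : V} (hv : IsHomogV 0 v) : adV (.L 0) v = 0 := by
  ext ⟨a, b⟩
  rw [adV_L_zero_apply, Finsupp.zero_apply]
  by_cases hab : a + b = 0
  · rw [← deg2_add, hab, deg2_zero, Int.cast_zero, neg_zero, zero_div, zero_mul]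
  · rw [hv a b hab, mul_zero]

lemma adV_L_zero_semisimple (v : V) :
    ∃ r, r.support ⊆ v.support ∧ adV (.L 0) (v - adV (.L 0) r) = 0 := by
  let w : Idx × Idx → ℂ := fun p => -2 / ((deg2 p.1 + deg2 p.2 : ℤ) : ℂ)
  refine ⟨w • v, fun p hp => ?_, ?_⟩
  · rw [Finsupp.mem_support_iff, Finsupp.coe_pointwise_smul, Pi.smul_apply'] at hp
    exact Finsupp.mem_support_iff.2 (right_ne_zero_of_mul hp)
  · ext ⟨a, b⟩
    rw [adV_L_zero_apply, Finsupp.sub_apply, adV_L_zero_apply, Finsupp.coe_pointwise_smul,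
      Pi.smul_apply', smul_eq_mul, Finsupp.zero_apply]
    by_cases h : ((deg2 a + deg2 b : ℤ) : ℂ) = 0
    · simp only [h, neg_zero, zero_div, zero_mul]
    · simp only [w]
      field_simp
      ring

namespace IsDerOfParity

variable {d : Lsa →ₗ[ℂ] V} (hd : IsDerOfParity 0 d)
include hd

/-- If `L 0 ∗ w = 0` for `w = d (L 0)`, then `L N ∗ w` is homogeneous of degree `N`, where the
cocycle condition for `L 0` and `L N` leaves no room for it. -/
lemma apply_L_zero_eq_zero (h : adV (.L 0) (d (e (.L 0))) = 0) : d (e (.L 0)) = 0 := by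
  have hdeg (a b : Idx) (hab : deg2 a + deg2 b ≠ 0) : d (e (.L 0)) (a, b) = 0 := by
    have := DFunLike.congr_fun h (a, b)
    rw [adV_L_zero_apply] at this
    refine (mul_eq_zero.1 this).resolve_left ?_
    exact div_ne_zero (neg_ne_zero.2 (mod_cast hab)) two_ne_zero
  refine eq_zero_of_adV_L_eq_zero fun N => ?_
  ext ⟨a, b⟩
  by_cases hab : deg2 a + deg2 b = 2 * N
  · have hc := DFunLike.congr_fun (hd.cocycle (.L 0) (.L N)) (a, b)
    simp only [L_zero, zero_add] at hc
    rw [← L_zero, Finsupp.sub_apply, adV_L_zero_apply, hab, str_L_L, Finsupp.smul_apply,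
      Finsupp.smul_apply, par_L, par_L, mul_zero, sgn_zero, one_smul, smul_eq_mul] at hc
    push_cast at hc
    rw [Finsupp.zero_apply]
    linear_combination hc
  · rw [adV_apply, hdeg, hdeg, mul_zero, mul_zero, add_zero, Finsupp.zero_apply]
    · rw [deg2_sub, deg2_L]; omega
    · rw [deg2_sub, deg2_L]; omega

lemma exists_sub_innMap_apply_L_zero :
    ∃ r, IsEvenV r ∧ (d - innMap 0 r) (e (.L 0)) = 0 := by
  obtain ⟨r, hsupp, hr⟩ := adV_L_zero_semisimple (d (e (.L 0)))
  have heven : IsEvenV r := fun p hp => hd.parity (.L 0) p (hsupp hp)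
  refine ⟨r, heven, (hd.sub heven.isDerOfParity_innMap).apply_L_zero_eq_zero ?_⟩
  rwa [LinearMap.sub_apply, innMap_zero_e]

lemma isHomogV (h0 : d (e (.L 0)) = 0) (i : Idx) : IsHomogV i (d (e i)) := by
  intro a b hab
  by_contra hne
  refine hab (idx_ext ?_ ?_)
  · rw [par_add]
    exact hd.parity i _ (Finsupp.mem_support_iff.2 hne)
  · have hc := DFunLike.congr_fun (hd.cocycle (.L 0) i) (a, b)
    rw [h0, map_zero, smul_zero, sub_zero, adV_L_zero_apply, Finsupp.smul_apply, str_L_zero, L_zero,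
      zero_add, smul_eq_mul, mul_left_inj' hne] at hc
    rw [deg2_add]
    have : (deg2 i : ℂ) = (deg2 a + deg2 b : ℤ) := by linear_combination -2 * hc
    exact mod_cast this.symm

lemma sub_innMap {r : V} (hr : IsHomogV 0 r) : IsDerOfParity 0 (d - innMap 0 r) :=
  hd.sub (hr.isEvenV).isDerOfParity_innMap

end IsDerOfParity

lemma sub_innMap_apply_L_zero {d : Lsa →ₗ[ℂ] V} (h0 : d (e (.L 0)) = 0) {r : V}
    (hr : IsHomogV 0 r) : (d - innMap 0 r) (e (.L 0)) = 0 := by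
  rw [LinearMap.sub_apply, innMap_zero_e, h0, adV_L_zero_eq_zero hr, sub_zero]

end Homogeneity

section Antidiagonal

/-- The homogeneous element of index `0` with components `f a` at `(a, -a)`. -/
def antidiag (f : Idx →₀ ℂ) : V := f.mapDomain fun a => (a, -a)

/-- The components of `v` along the shifted antidiagonal `a ↦ (a + j, j' - a)`. -/
def diag (v : V) (j j' : Idx) : Idx →₀ ℂ :=
  v.comapDomain (fun a => (a + j, j' - a)) (Function.Injective.injOn fun _ _ h =>
    add_right_cancel (congrArg Prod.fst h))

lemma antidiag_apply_of_add_eq_zero (f : Idx →₀ ℂ) {a b : Idx} (h : a + b = 0) :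
    antidiag f (a, b) = f a := by
  rw [← neg_eq_of_add_eq_zero_right h]
  exact Finsupp.mapDomain_apply (fun a b h => congrArg Prod.fst h) f a

lemma isHomogV_antidiag (f : Idx →₀ ℂ) : IsHomogV 0 (antidiag f) := by
  refine fun a b hab => Finsupp.mapDomain_of_notMem_range _ _ ?_
  rintro ⟨c, hc⟩
  rw [Prod.mk.injEq] at hc
  exact hab (by rw [← hc.1, ← hc.2, add_neg_cancel])

lemma diag_apply (v : V) (j j' a : Idx) : diag v j j' a = v (a + j, j' - a) := rfl

lemma diag_apply_G (v : V) {j j' : Idx} (hj : par j = 0) (hj' : par j' = 0) (k : ℤ) :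
    diag v j j' (.G k) = v (.G (k + deg2 j), .G (deg2 j' - k)) := by
  rw [diag_apply]
  congr 2
  · exact idx_ext (by rw [par_add, hj, add_zero]; rfl) (deg2_add _ _)
  · exact idx_ext (by rw [par_sub, hj', zero_add]; rfl) (deg2_sub _ _)

end Antidiagonal

section OddComponent

/-- `v` has no component in the tensor square of the odd part of `𝓛`. -/
def IsGGFree (v : V) : Prop := ∀ a b, v (.G a, .G b) = 0

lemma adV_L_apply_G_G (m : ℤ) (v : V) (a b : ℤ) :
    adV (.L m) v (.G a, .G b) = (3 * m - a) / 2 * v (.G (a - 2 * m), .G b)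
      + (3 * m - b) / 2 * v (.G a, .G (b - 2 * m)) := by
  rw [adV_apply_of_add (a' := .G (a - 2 * m)) (b' := .G (b - 2 * m)) v
    (by rw [L_add_G, sub_add_cancel]) (by rw [L_add_G, sub_add_cancel]), str_L_G, str_L_G, par_L,
    zero_mul, sgn_zero]
  push_cast
  ring

lemma adV_T_apply_G_G (k : ℤ) (v : V) (a b : ℤ) :
    adV (.T k) v (.G a, .G b)
      = v (.G (a - (2 * k + 1)), .G b) + v (.G a, .G (b - (2 * k + 1))) := by
  rw [adV_apply_of_add (a' := .G (a - (2 * k + 1))) (b' := .G (b - (2 * k + 1))) v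
    (by rw [T_add_G, add_assoc, sub_add_cancel]) (by rw [T_add_G, add_assoc, sub_add_cancel]),
    str_T_G, str_T_G, par_T, zero_mul, sgn_zero, one_mul, one_mul, one_mul]

namespace IsGGFree

lemma apply_eq_zero {v : V} (hv : IsGGFree v) : ∀ {a b : Idx}, par a = 1 → par b = 1 → v (a, b) = 0
  | .G a, .G b, _, _ => hv a b

lemma adV_T {v : V} (hv : IsGGFree v) (k : ℤ) : IsGGFree (adV (.T k) v) := fun a b => by
  rw [adV_T_apply_G_G, hv, hv, add_zero]

lemma adV_L {v : V} (hv : IsGGFree v) (m : ℤ) : IsGGFree (adV (.L m) v) := fun a b => by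
  rw [adV_L_apply_G_G, hv, hv, mul_zero, mul_zero, add_zero]

lemma sub {u v : V} (hu : IsGGFree u) (hv : IsGGFree v) : IsGGFree (u - v) := fun a b => by
  rw [Finsupp.sub_apply, hu, hv, sub_zero]

/-- The hypothesis makes `v` alternate along the infinite sequence `(G (a + nc), G (b - nc))`,
`c = 2 * k + 1 ≠ 0`, on which it has finite support. -/
lemma of_adV_T {v : V} {k : ℤ} (h : IsGGFree (adV (.T k) v)) : IsGGFree v := by
  intro a b
  by_contra hab
  have hne (n : ℕ) : v (.G (a + n * (2 * k + 1)), .G (b - n * (2 * k + 1))) ≠ 0 := by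
    induction n with
    | zero => simpa using hab
    | succ n ih =>
      have := h (a + (n + 1) * (2 * k + 1)) (b - n * (2 * k + 1))
      rw [adV_T_apply_G_G] at this
      contrapose! ih
      push_cast at ih
      ring_nf at this ih ⊢
      rwa [ih, add_zero] at this
  refine Set.infinite_range_of_injective (f := fun n : ℕ =>
    (Idx.G (a + n * (2 * k + 1)), Idx.G (b - n * (2 * k + 1)))) (fun n n' hnn' => ?_)
    (v.support.finite_toSet.subset (Set.range_subset_iff.2 fun n =>
      Finsupp.mem_support_iff.2 (hne n)))
  have hc : 2 * k + 1 ≠ 0 := by omega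
  simpa [hc] using hnn'

end IsGGFree

lemma IsHomogV.isGGFree {i : Idx} {v : V} (hv : IsHomogV i v)
    (h : ∀ k, v (.G k, .G (deg2 i - k)) = 0) : IsGGFree v := by
  intro a b
  by_cases hab : Idx.G a + .G b = i
  · convert h a using 4
    rw [← hab, deg2_add, deg2_G, deg2_G, add_sub_cancel_left]
  · exact hv _ _ hab

namespace IsDerOfParity

variable {d : Lsa →ₗ[ℂ] V} (hd : IsDerOfParity 0 d)
include hd

lemma cocycle_apply (i j : Idx) (p : Idx × Idx) :
    str i j * d (e (i + j)) p
      = adV i (d (e j)) p - sgn (par i * par j) * adV j (d (e i)) p :=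
  DFunLike.congr_fun (hd.cocycle i j) p

lemma apply_T_neg_one_G_G (k : ℤ) :
    d (e (.T (-1))) (.G k, .G (-1 - k))
      = (k + 3) * d (e (.T 0)) (.G (k + 2), .G (-1 - k))
        - (k - 2) * d (e (.T 0)) (.G k, .G (1 - k))
        + 2 * (d (e (.L (-1))) (.G (k - 1), .G (-1 - k))
          + d (e (.L (-1))) (.G k, .G (-2 - k))) := by
  have h := hd.cocycle_apply (.L (-1)) (.T 0) (.G k, .G (-1 - k))
  rw [L_add_T, str_L_T, adV_L_apply_G_G, adV_T_apply_G_G, par_L, zero_mul, sgn_zero] at h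
  push_cast at h
  ring_nf at h ⊢
  linear_combination -2 * h

lemma apply_T_zero_G_G (k : ℤ) :
    d (e (.T 0)) (.G k, .G (1 - k))
      = (3 - k) * d (e (.T (-1))) (.G (k - 2), .G (1 - k))
        + (k + 2) * d (e (.T (-1))) (.G k, .G (-1 - k))
        - 2 * (d (e (.L 1)) (.G (k + 1), .G (1 - k)) + d (e (.L 1)) (.G k, .G (2 - k))) := by
  have h := hd.cocycle_apply (.L 1) (.T (-1)) (.G k, .G (1 - k))
  rw [L_add_T, str_L_T, adV_L_apply_G_G, adV_T_apply_G_G, par_L, zero_mul, sgn_zero] at h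
  push_cast at h
  ring_nf at h ⊢
  linear_combination 2 * h

/-- With `t = d (T 0)` and `s = d (T (-1))` read along antidiagonals, and with `N = 1 + shift` the
action of `T 0`, the cocycle relations between `L (±1)` and `T 0`, `T (-1)` say `s ≡ 3t` and
`t ≡ 3s` modulo the image of `N`. Hence `8t` lies in that image. -/
lemma exists_sub_innMap_apply_T_zero_isGGFree (h0 : d (e (.L 0)) = 0) :
    ∃ r, IsHomogV 0 r ∧ IsGGFree ((d - innMap 0 r) (e (.T 0))) := by
  let κ (a : Idx) : ℂ := deg2 a
  let φ : Idx →₀ ℂ := (fun a => κ a + 2) • diag (d (e (.T 0))) (.T 0) 0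
    - (fun a => κ a + 3) • diag (d (e (.T 0))) (.L 1) (.T (-1))
    - (2 : ℂ) • diag (d (e (.L (-1)))) 0 (.L (-1))
  let ψ : Idx →₀ ℂ := (fun a => κ a - 1) • diag (d (e (.T (-1)))) 0 (.T (-1))
    - (fun a => κ a - 2) • diag (d (e (.T (-1)))) (.T (-1)) 0
    - (2 : ℂ) • diag (d (e (.L 1))) (.T 0) (.T 0)
  have hφ (k : ℤ) : φ (.G k) = (k + 2) * d (e (.T 0)) (.G (k + 1), .G (-k))
      - (k + 3) * d (e (.T 0)) (.G (k + 2), .G (-1 - k))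
      - 2 * d (e (.L (-1))) (.G k, .G (-2 - k)) := by
    simp only [φ, κ, Finsupp.sub_apply, Finsupp.smul_apply, Finsupp.coe_pointwise_smul,
      Pi.smul_apply', smul_eq_mul]
    rw [diag_apply_G _ (par_T _) par_zero, diag_apply_G _ (par_L _) (par_T _),
      diag_apply_G _ par_zero (par_L _), deg2_zero, deg2_T, deg2_T, deg2_L, deg2_L, deg2_G]
    ring_nf
  have hψ (k : ℤ) : ψ (.G k) = (k - 1) * d (e (.T (-1))) (.G k, .G (-1 - k))
      - (k - 2) * d (e (.T (-1))) (.G (k - 1), .G (-k))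
      - 2 * d (e (.L 1)) (.G (k + 1), .G (1 - k)) := by
    simp only [ψ, κ, Finsupp.sub_apply, Finsupp.smul_apply, Finsupp.coe_pointwise_smul,
      Pi.smul_apply', smul_eq_mul]
    rw [diag_apply_G _ par_zero (par_T _), diag_apply_G _ (par_T _) par_zero,
      diag_apply_G _ (par_T _) (par_T _), deg2_zero, deg2_T, deg2_T, deg2_G]
    ring_nf
  have hr := isHomogV_antidiag ((8 : ℂ)⁻¹ • ((3 : ℂ) • φ - ψ))
  refine ⟨_, hr, ((hd.sub_innMap hr).isHomogV (sub_innMap_apply_L_zero h0 hr) _).isGGFree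
    fun k => ?_⟩
  rw [LinearMap.sub_apply, innMap_zero_e, Finsupp.sub_apply, deg2_T, adV_T_apply_G_G,
    antidiag_apply_of_add_eq_zero, antidiag_apply_of_add_eq_zero]
  · simp only [Finsupp.sub_apply, Finsupp.smul_apply, smul_eq_mul, hφ, hψ]
    have hs := hd.apply_T_neg_one_G_G k
    have ht := hd.apply_T_zero_G_G k
    push_cast at hs ht ⊢
    ring_nf at hs ht ⊢
    linear_combination -3 / 8 * hs - 1 / 8 * ht
  · rw [G_add_G_of_add_eq (k := 0) (by ring), L_zero]
  · rw [G_add_G_of_add_eq (k := 0) (by ring), L_zero]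

lemma isGGFree_apply_T (h : IsGGFree (d (e (.T 0)))) (k : ℤ) : IsGGFree (d (e (.T k))) := by
  refine IsGGFree.of_adV_T (k := 0) fun a b => ?_
  have hc := hd.cocycle_apply (.T 0) (.T k) (.G a, .G b)
  rw [str_T_T, zero_mul, h.adV_T, mul_zero, sub_zero] at hc
  exact hc.symm

lemma isGGFree_apply_L (h : IsGGFree (d (e (.T 0)))) (m : ℤ) : IsGGFree (d (e (.L m))) := by
  refine IsGGFree.of_adV_T (k := 0) fun a b => ?_
  have hc := hd.cocycle_apply (.T 0) (.L m) (.G a, .G b)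
  rw [T_add_L, hd.isGGFree_apply_T h, h.adV_L, mul_zero, mul_zero, sub_zero] at hc
  exact hc.symm

end IsDerOfParity

end OddComponent

section OddPotential

lemma neg_L (m : ℤ) : -Idx.L m = .L (-m) :=
  idx_ext (par_neg _) (by rw [deg2_neg, deg2_L, deg2_L, mul_neg])

lemma str_G_neg_ne_zero {n : ℤ} (hn : n ≠ 0) {a : Idx} (ha : par a = 0)
    (h : str (.G n) a = 0) : str (.G n) (-a) ≠ 0 := by
  rcases a with m | k | n'
  · rw [str_G_L, div_eq_zero_iff, neg_eq_zero, sub_eq_zero, Int.cast_inj] at h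
    rw [neg_L, str_G_L, h.resolve_right two_ne_zero]
    have : (n : ℂ) ≠ 0 := Int.cast_ne_zero.2 hn
    push_cast
    intro h'
    exact this (by linear_combination h')
  · simp at h
  · exact absurd ha one_ne_zero

lemma adV_G_antidiag_eq {n : ℤ} {f : Idx →₀ ℂ} {w : V} (hw : IsHomogV (.G n) w)
    (hf : ∀ a, par a = 1 → f a = 0)
    (hleft : ∀ a, par a = 0 → str (.G n) a * f a = w (a + .G n, -a))
    (hright : ∀ a, par a = 0 → str (.G n) (-a) * f a = w (a, .G n - a)) :
    adV (.G n) (antidiag f) = w := by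
  ext ⟨a, b⟩
  by_cases hab : a + b = .G n
  · obtain rfl : b = .G n - a := eq_sub_of_add_eq' hab
    rw [adV_apply_of_add _ (add_sub_cancel _ a) (sub_eq_add_neg _ a).symm,
      antidiag_apply_of_add_eq_zero f (by abel), antidiag_apply_of_add_eq_zero f (by abel), par_G,
      one_mul]
    obtain ha | ha := zmod_two_eq_zero_or_one (par a)
    · rw [hf (a - .G n) (by rw [par_sub, ha, par_G, zero_add]), ha, mul_zero, zero_add, sgn_zero,
        one_mul, hright a ha]
    · rw [hf a ha, mul_zero, add_zero, hleft _ (by rw [par_sub, ha]; rfl), sub_add_cancel, neg_sub]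
  · rw [hw a b hab]
    exact (isHomogV_antidiag f).adV _ _ _ (by rwa [add_zero])

/-- A preimage of `w` under `G n` is sought among the elements `antidiag f` with `f` supported on
even indices. The hypothesis on `G n ∗ w` makes the two conditions of `adV_G_antidiag_eq` on `f a`
compatible, and by `str_G_neg_ne_zero` at least one of their coefficients is nonzero. -/
lemma exists_adV_G_eq {n : ℤ} (hn : n ≠ 0) {w : V} (hw : IsHomogV (.G n) w)
    (hGG : IsGGFree (adV (.G n) w)) :
    ∃ r, IsHomogV 0 r ∧ IsGGFree r ∧ adV (.G n) r = w := by
  let μ : Idx → ℂ := str (.G n)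
  let f : Idx →₀ ℂ := (fun a => if par a = 0 then (μ a)⁻¹ else 0) • diag w (.G n) 0
    + (fun a => if par a = 0 ∧ μ a = 0 then (μ (-a))⁻¹ else 0) • diag w 0 (.G n)
  have hf (a : Idx) : f a = (if par a = 0 then (μ a)⁻¹ else 0) * w (a + .G n, -a)
      + (if par a = 0 ∧ μ a = 0 then (μ (-a))⁻¹ else 0) * w (a, .G n - a) := by
    simp only [f, Finsupp.add_apply, Finsupp.coe_pointwise_smul, Pi.smul_apply', smul_eq_mul,
      diag_apply, zero_sub, add_zero]
  have hf_odd (a : Idx) (ha : par a = 1) : f a = 0 := by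
    simp [hf, ha]
  have hcompat (a : Idx) (ha : par a = 0) :
      μ a * w (a, .G n - a) = μ (-a) * w (a + .G n, -a) := by
    have h := hGG.apply_eq_zero (a := a + .G n) (b := .G n - a)
      (by rw [par_add, ha, zero_add, par_G]) (by rw [par_sub, ha, add_zero, par_G])
    rw [adV_apply_of_add w (add_comm _ a) (sub_eq_add_neg _ a).symm, par_add, ha, zero_add,
      par_G, mul_one, sgn_one] at h
    linear_combination h
  have hleft (a : Idx) (ha : par a = 0) : μ a * f a = w (a + .G n, -a) := by
    rw [hf, if_pos ha]
    by_cases hμ : μ a = 0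
    · have h := hcompat a ha
      rw [hμ, zero_mul, zero_eq_mul] at h
      rw [hμ, zero_mul, h.resolve_left (str_G_neg_ne_zero hn ha hμ)]
    · rw [if_neg fun h => hμ h.2, zero_mul, add_zero, mul_inv_cancel_left₀ hμ]
  have hright (a : Idx) (ha : par a = 0) : μ (-a) * f a = w (a, .G n - a) := by
    by_cases hμ : μ a = 0
    · rw [hf, if_pos ha, if_pos ⟨ha, hμ⟩, hμ, inv_zero, zero_mul, zero_add,
        mul_inv_cancel_left₀ (str_G_neg_ne_zero hn ha hμ)]
    · refine mul_left_cancel₀ hμ ?_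
      rw [hcompat a ha, ← hleft a ha, mul_left_comm]
  refine ⟨antidiag f, isHomogV_antidiag f, ?_, adV_G_antidiag_eq hw hf_odd hleft hright⟩
  intro a b
  by_cases hab : Idx.G a + .G b = 0
  · rw [antidiag_apply_of_add_eq_zero f hab, hf_odd _ (par_G a)]
  · exact isHomogV_antidiag f _ _ hab

lemma IsDerOfParity.exists_sub_innMap_apply_G_one {d : Lsa →ₗ[ℂ] V} (hd : IsDerOfParity 0 d)
    (h0 : d (e (.L 0)) = 0) (hT : IsGGFree (d (e (.T 0)))) :
    ∃ r, IsHomogV 0 r ∧ IsGGFree r ∧ (d - innMap 0 r) (e (.G 1)) = 0 := by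
  have hGG : IsGGFree (adV (.G 1) (d (e (.G 1)))) := fun a b => by
    have hc := hd.cocycle_apply (.G 1) (.G 1) (.G a, .G b)
    rw [G_add_G_of_add_eq (k := 1) rfl, hd.isGGFree_apply_L hT, par_G, mul_one, sgn_one,
      mul_zero] at hc
    linear_combination -hc / 2
  obtain ⟨r, hr, hrGG, hrG⟩ := exists_adV_G_eq one_ne_zero (hd.isHomogV h0 (.G 1)) hGG
  exact ⟨r, hr, hrGG, by rw [LinearMap.sub_apply, innMap_zero_e, hrG, sub_self]⟩

end OddPotential

section EvenComponent

lemma eq_zero_of_recurrence {q : ℤ → ℂ} (h : ∀ k : ℤ, (k + 2) * q k = (k - 1) * q (k - 1))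
    (h0 : q 0 = 0) (k : ℤ) : q k = 0 := by
  induction k using Int.induction_on with
  | zero => exact h0
  | succ n ih =>
    have hn := h (n + 1)
    rw [add_sub_cancel_right, ih, mul_zero] at hn
    refine (mul_eq_zero.1 hn).resolve_left ?_
    norm_cast
  | pred n ih =>
    have hn := h (-n)
    rw [ih, mul_zero, zero_eq_mul] at hn
    refine hn.resolve_left ?_
    norm_cast
    omega

lemma str_G_zero_G_two_mul (k : ℤ) : str (.G 0) (.G (2 * k)) = 2 := str_G_even_G_even 0 k

namespace IsGGFree

variable {v : V} (hv : IsGGFree v)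
include hv

lemma adV_G_one_apply_G_L (k : ℤ) (l : ℤ) :
    adV (.G 1) v (.G (2 * k), .L l) = -v (.T (k - 1), .L l) := by
  rw [adV_apply_of_add (a' := .T (k - 1)) (b' := .G (2 * l - 1)) v
    (by rw [G_add_T]; congr 1; ring) (G_add_G_of_add_eq (by ring)), hv, str_G_T]
  ring

lemma adV_G_one_apply_L_G (k l : ℤ) :
    adV (.G 1) v (.L k, .G (2 * l)) = -v (.L k, .T (l - 1)) := by
  rw [adV_apply_of_add (a' := .G (2 * k - 1)) (b' := .T (l - 1)) v
    (G_add_G_of_add_eq (by ring)) (by rw [G_add_T]; congr 1; ring), hv, str_G_T, par_L,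
    mul_zero (par _), sgn_zero]
  ring

lemma adV_G_one_apply_T_G (k l : ℤ) :
    adV (.G 1) v (.T k, .G (2 * l + 1)) = -(l - 1) / 2 * v (.T k, .L l) := by
  rw [adV_apply_of_add (a' := .G (2 * k)) (b' := .L l) v
    (G_add_G_of_add_eq_add_one (by ring)) (by rw [G_add_L]; congr 1; ring), hv, str_G_L, par_T,
    mul_zero (par _), sgn_zero]
  push_cast
  ring

lemma adV_G_one_apply_G_T (k l : ℤ) :
    adV (.G 1) v (.G (2 * k + 1), .T l) = -(k - 1) / 2 * v (.L k, .T l) := by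
  rw [adV_apply_of_add (a' := .L k) (b' := .G (2 * l)) v
    (by rw [G_add_L]; congr 1; ring) (G_add_G_of_add_eq_add_one (by ring)), hv, str_G_L]
  push_cast
  ring

lemma adV_G_zero_adV_G_one_apply_L_L (k l : ℤ) :
    adV (.G 0) (adV (.G 1) v) (.L k, .L l)
      = -2 * (v (.T (k - 1), .L l) + v (.L k, .T (l - 1))) := by
  rw [adV_apply_of_add (a' := .G (2 * k)) (b' := .G (2 * l)) _
    (G_add_G_of_add_eq (zero_add _)) (G_add_G_of_add_eq (zero_add _)), hv.adV_G_one_apply_G_L,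
    hv.adV_G_one_apply_L_G, str_G_zero_G_two_mul, str_G_zero_G_two_mul, par_L, mul_zero, sgn_zero]
  ring

lemma adV_G_zero_adV_G_one_apply_G_G (k l : ℤ) :
    adV (.G 0) (adV (.G 1) v) (.G (2 * k + 1), .G (2 * l + 1))
      = ((l - 1) * v (.T k, .L l) - (k - 1) * v (.L k, .T l)) / 2 := by
  rw [adV_apply_of_add (a' := .T k) (b' := .T l) _
    (by rw [G_add_T, zero_add]) (by rw [G_add_T, zero_add]), hv.adV_G_one_apply_T_G,
    hv.adV_G_one_apply_G_T, str_G_T, str_G_T, par_G, par_G, mul_one, sgn_one]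
  ring

end IsGGFree

lemma adV_T_zero_apply_T_T (v : V) :
    adV (.T 0) v (.T 0, .T (-1)) = (v (.L 0, .T (-1)) + v (.T 0, .L (-1))) / 2 := by
  rw [adV_apply_of_add (a := .T 0) (b := .T (-1)) (a' := .L 0) (b' := .L (-1)) v
      (T_add_L 0 0) (T_add_L 0 (-1)),
    str_T_L, str_T_L, par_T, mul_zero, sgn_zero]
  push_cast
  ring

lemma adV_T_neg_one_adV_L_one_apply_T_T (v : V) :
    adV (.T (-1)) (adV (.L 1) v) (.T 0, .T (-1))
      = -(v (.L 0, .T (-1)) + 3 / 2 * v (.L 1, .T (-2)) + v (.T (-1), .L 0) / 2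
          + 2 * v (.T 0, .L (-1))) / 2 := by
  rw [adV_apply_of_add (a := .T 0) (b := .T (-1)) (a' := .L 1) (b' := .L 0) _
      (T_add_L (-1) 1) (T_add_L (-1) 0),
    adV_apply_of_add (a := .L 1) (b := .T (-1)) (a' := .L 0) (b' := .T (-2)) v
      (L_add_L 1 0) (L_add_T 1 (-2)),
    adV_apply_of_add (a := .T 0) (b := .L 0) (a' := .T (-1)) (b' := .L (-1)) v
      (L_add_T 1 (-1)) (L_add_L 1 (-1))]
  simp only [str_T_L, str_L_L, str_L_T, par_T, par_L, mul_zero, sgn_zero]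
  push_cast
  ring

lemma IsHomogV.eq_zero_of_isGGFree {k : ℤ} {v : V} (hv : IsHomogV (.T k) v) (hGG : IsGGFree v)
    (hTL : ∀ m, v (.T m, .L (k - m)) = 0) (hLT : ∀ m, v (.L m, .T (k - m)) = 0) : v = 0 := by
  ext ⟨a, b⟩
  by_cases hab : a + b = .T k
  · obtain rfl : b = .T k - a := eq_sub_of_add_eq' hab
    rcases a with m | m | n
    · rw [← add_sub_cancel m k, ← L_add_T, add_sub_cancel_left]
      exact hLT m
    · rw [← add_sub_cancel m k, ← T_add_L, add_sub_cancel_left]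
      exact hTL m
    · exact hGG.apply_eq_zero rfl (by rw [par_sub]; rfl)
  · exact hv a b hab

/-- With `p k` and `q k` the components of `t` at `(L k, T (-1 - k))` and `(T k, L (-1 - k))`, the
relation `h2` says `p k = -q (k - 1)` and `(k + 2) q k = (k - 1) q (k - 1)`, so that everything is
determined by `q 0`; a single component of `h1` kills `q 0`. -/
lemma eq_zero_of_adV_relations {t : V} (ht : IsHomogV (.T (-1)) t) (hGG : IsGGFree t)
    (h1 : adV (.T 0) t = (2 : ℂ) • adV (.T (-1)) (adV (.L 1) t))
    (h2 : adV (.G 0) (adV (.G 1) t) = 0) : t = 0 := by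
  let p (k : ℤ) : ℂ := t (.L k, .T (-1 - k))
  let q (k : ℤ) : ℂ := t (.T k, .L (-1 - k))
  have hp (k : ℤ) : p k = -q (k - 1) := by
    have h := hGG.adV_G_zero_adV_G_one_apply_L_L k (-k)
    rw [h2, Finsupp.zero_apply] at h
    simp only [p, q]
    ring_nf at h ⊢
    linear_combination h / 2
  have hrec (k : ℤ) : (k + 2) * q k = (k - 1) * q (k - 1) := by
    have h := hGG.adV_G_zero_adV_G_one_apply_G_G k (-1 - k)
    rw [h2, Finsupp.zero_apply] at h
    push_cast at h
    linear_combination 2 * h - (k - 1) * hp k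
  have hq0 : q 0 = 0 := by
    have h := adV_T_zero_apply_T_T t
    rw [h1, Finsupp.smul_apply, adV_T_neg_one_adV_L_one_apply_T_T, smul_eq_mul] at h
    have hrec0 := hrec 0
    have hp0 := hp 0
    have hp1 := hp 1
    simp only [p, q] at hrec0 hp0 hp1 ⊢
    norm_num at hrec0 hp0 hp1 h ⊢
    linear_combination -h / 3 + hrec0 / 3 - hp0 / 2 - hp1 / 2
  have hq : ∀ k, q k = 0 := eq_zero_of_recurrence hrec hq0
  exact ht.eq_zero_of_isGGFree hGG hq fun k => (hp k).trans (by rw [hq, neg_zero])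

end EvenComponent

section Cohomology

namespace IsDerOfParity

variable {d : Lsa →ₗ[ℂ] V} (hd : IsDerOfParity 0 d)
include hd

lemma apply_add_eq_zero {i j : Idx} (hij : str i j ≠ 0) (hi : d (e i) = 0) (hj : d (e j) = 0) :
    d (e (i + j)) = 0 := by
  have h := hd.cocycle i j
  rw [hi, hj, map_zero, map_zero, smul_zero, sub_zero] at h
  exact (smul_eq_zero.1 h).resolve_left hij

lemma apply_L_one_eq_zero (hG : d (e (.G 1)) = 0) : d (e (.L 1)) = 0 := by
  rw [← G_add_G_of_add_eq (n := 1) (m := 1) (k := 1) rfl]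
  refine hd.apply_add_eq_zero ?_ hG hG
  simpa using (str_G_odd_G_odd 0 0).trans_ne (neg_ne_zero.2 two_ne_zero)

lemma apply_T_neg_one_eq_zero (h0 : d (e (.L 0)) = 0) (hT : IsGGFree (d (e (.T 0))))
    (hG : d (e (.G 1)) = 0) : d (e (.T (-1))) = 0 := by
  refine eq_zero_of_adV_relations (hd.isHomogV h0 _) (hd.isGGFree_apply_T hT _) ?_ ?_
  · have hT0 : (1 / 2 : ℂ) • d (e (.T 0)) = adV (.L 1) (d (e (.T (-1)))) := by
      have h := hd.cocycle (.L 1) (.T (-1))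
      rw [L_add_T, str_L_T, hd.apply_L_one_eq_zero hG, map_zero, smul_zero, sub_zero] at h
      norm_num at h ⊢
      exact h
    have h := hd.cocycle (.T 0) (.T (-1))
    rw [str_T_T, zero_smul, par_T, zero_mul, sgn_zero, one_smul] at h
    rw [← hT0, map_smul, smul_smul, ← sub_eq_zero.1 h.symm]
    norm_num
  · have hG0 : d (e (.G 0)) = -adV (.G 1) (d (e (.T (-1)))) := by
      have h := hd.cocycle (.T (-1)) (.G 1)
      rw [T_add_G, str_T_G, hG, map_zero, zero_sub, par_T, zero_mul, sgn_zero, one_smul,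
        one_smul] at h
      exact h
    have h := hd.cocycle (.G 0) (.G 0)
    rw [G_add_G_of_add_eq (k := 0) rfl, h0, smul_zero, hG0, par_G, mul_one, sgn_one, map_neg] at h
    linear_combination (norm := module) (1 / 2 : ℂ) • h

lemma eq_zero_of_apply_eq_zero (hT : d (e (.T (-1))) = 0) (hG : d (e (.G 1)) = 0) : d = 0 := by
  have hG0 : d (e (.G 0)) = 0 := hd.apply_add_eq_zero (by norm_num) hT hG
  have hT0 : d (e (.T 0)) = 0 := by
    rw [← G_add_G_of_add_eq_add_one (n := 0) (m := 1) (k := 0) rfl]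
    refine hd.apply_add_eq_zero ?_ hG0 hG
    simpa using (str_G_even_G_odd 0 0).trans_ne (by norm_num)
  have hGn (n : ℤ) : d (e (.G n)) = 0 := by
    induction n using Int.induction_on with
    | zero => exact hG0
    | succ n ih =>
      have h := hd.apply_add_eq_zero (by norm_num) hT0 ih
      rwa [T_add_G] at h
    | pred n ih =>
      have h := hd.apply_add_eq_zero (by norm_num) hT ih
      rwa [T_add_G, show -(n : ℤ) + 2 * -1 + 1 = -n - 1 by ring] at h
  refine lsa_hom_ext fun i => ?_
  rw [LinearMap.zero_apply]
  rcases i with m | k | n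
  · rw [← G_add_G_of_add_eq (zero_add (2 * m))]
    exact hd.apply_add_eq_zero (by norm_num [str_G_zero_G_two_mul]) hG0 (hGn _)
  · rw [← G_add_G_of_add_eq_add_one (zero_add (2 * k + 1))]
    refine hd.apply_add_eq_zero ?_ hG0 (hGn _)
    have h : (k : ℂ) + 1 / 2 ≠ 0 := fun h => by
      have : (2 * k + 1 : ℤ) = (0 : ℂ) := by
        push_cast
        linear_combination 2 * h
      norm_cast at this
      omega
    simpa using (str_G_even_G_odd 0 k).trans_ne (by rwa [Int.cast_zero, sub_zero])
  · exact hGn n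

theorem exists_eq_innMap : ∃ r, IsEvenV r ∧ d = innMap 0 r := by
  obtain ⟨r₁, hr₁, h0⟩ := hd.exists_sub_innMap_apply_L_zero
  have hd₁ := hd.sub hr₁.isDerOfParity_innMap
  obtain ⟨r₂, hr₂, hT⟩ := hd₁.exists_sub_innMap_apply_T_zero_isGGFree h0
  have hd₂ := hd₁.sub_innMap hr₂
  have h0₂ := sub_innMap_apply_L_zero h0 hr₂
  obtain ⟨r₃, hr₃, hGG, hG⟩ := hd₂.exists_sub_innMap_apply_G_one h0₂ hT
  have hd₃ := hd₂.sub_innMap hr₃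
  have hT₃ : IsGGFree ((d - innMap 0 r₁ - innMap 0 r₂ - innMap 0 r₃) (e (.T 0))) := by
    rw [LinearMap.sub_apply _ (innMap 0 r₃), innMap_zero_e]
    exact IsGGFree.sub hT (hGG.adV_T 0)
  have hT' := hd₃.apply_T_neg_one_eq_zero (sub_innMap_apply_L_zero h0₂ hr₃) hT₃ hG
  refine ⟨r₁ + r₂ + r₃, (hr₁.add hr₂.isEvenV).add hr₃.isEvenV, LinearMap.ext fun x => ?_⟩
  have hx := DFunLike.congr_fun (hd₃.eq_zero_of_apply_eq_zero hT' hG) x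
  simp only [LinearMap.sub_apply, LinearMap.zero_apply] at hx
  rw [innMap_add, innMap_add, LinearMap.add_apply, LinearMap.add_apply]
  linear_combination (norm := module) hx

end IsDerOfParity

end Cohomology

namespace IsLieSuperBialgebraDelta

variable {D : Lsa → V} (hD : IsLieSuperBialgebraDelta D)
include hD

lemma isDerOfParity : IsDerOfParity 0 (hD.linear.mk' D) := by
  refine ⟨fun i => ?_, fun i j => ?_⟩
  · rw [add_zero]
    exact hD.parity i
  · rw [zero_mul, sgn_zero, one_smul, zero_add, mul_comm (par j)]
    exact hD.cocycle i j

lemma tauHom_apply (x : Lsa) : tauHom (D x) = -D x := by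
  obtain ⟨v, hv⟩ := hD.skewIm x
  rw [← hv]
  simp only [tau_eq, map_sub, tauHom_tauHom, neg_sub]

lemma cycSum_oneTensorMap_apply (x : Lsa) : cycSum (oneTensorMap D (D x)) = 0 := by
  have h := hD.coJacobi x
  rwa [xi_eq, xi_eq] at h

variable {r : V} (hr : ∀ i, D (e i) = adV i r)
include hr

lemma tauHom_eq_neg : tauHom r = -r := by
  refine eq_neg_of_add_eq_zero_left (eq_zero_of_adV_L_eq_zero fun N => ?_)
  rw [map_add, ← tauHom_adV, ← hr, hD.tauHom_apply, neg_add_cancel]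

lemma cYB_eq_zero (heven : IsEvenV r) : cYB r = 0 := by
  refine eq_zero_of_adW_L_eq_zero fun N => ?_
  rw [← cycSum_oneTensorMap hr heven (hD.tauHom_eq_neg hr), ← hr, hD.cycSum_oneTensorMap_apply]

lemma eq_act2 (x : Lsa) : D x = act2 x r := by
  have h : hD.linear.mk' D = (ofBasis adV).flip r :=
    lsa_hom_ext fun i => (hr i).trans (by rw [LinearMap.flip_apply, ofBasis_e])
  rw [act2_eq_ofBasis, ← LinearMap.flip_apply, ← h, IsLinearMap.mk'_apply]

end IsLieSuperBialgebraDelta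

/-- Every Lie super-bialgebra structure `(𝓛, [·,·], Δ)` on the centerless twisted
N=2 superconformal algebra `𝓛` is triangular coboundary: there is an even
`r ∈ Im(1⊗1 - τ)` with `c(r) = 0` such that `Δ(x) = (-1)^{[r][x]} x ∗ r = x ∗ r`. -/
theorem superBialgebra_is_triangular_coboundary (D : Lsa → V)
    (hD : IsLieSuperBialgebraDelta D) :
    ∃ r : V, r ∈ ImOneSubTau ∧ IsEvenV r ∧ cYB r = 0 ∧ ∀ x : Lsa, D x = act2 x r := by
  obtain ⟨r, heven, hinn⟩ := hD.isDerOfParity.exists_eq_innMap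
  have hr (i : Idx) : D (e i) = adV i r := by
    rw [← innMap_zero_e, ← hinn, IsLinearMap.mk'_apply]
  exact ⟨r, mem_ImOneSubTau_of_tauHom_eq_neg (hD.tauHom_eq_neg hr), heven,
    hD.cYB_eq_zero hr heven, hD.eq_act2 hr⟩

end
end N2
end

section
/- Let L be the centerless twisted N=2 superconformal algebra and regard the n-fold tensor power L^{⊗n} as an L-module under the adjoint diagonal action. If r ∈ L^{⊗n} satisfies x ∗ r = 0 for all x ∈ L, then r = 0. -/
namespace N2

noncomputable section

/-!
The even operator `ad L_m` is a weighted shift of the basis of `𝓛`, along an injective map of the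
indices, so `L_m` acts on `𝓛^{⊗n}` as the sum, without signs, of this shift over the `n` slots. Only
finitely many basis elements occur in `r`, and for all but finitely many `m` the operator `ad L_m`
moves each of them, with a nonzero coefficient, to one that does not occur. For such an `m`, a tuple
obtained by shifting one entry of a tuple of `r` has exactly one new entry, which reveals the
shifted slot and, by injectivity of the shift, the original tuple. Nothing cancels in `L_m ∗ r`, so
`L_m ∗ r = 0` forces `r = 0`.
-/

section DiagonalWeightedShift

open Finsupp Function

variable {ι κ R : Type*} [DecidableEq κ] {σ : ι → ι} {S : Set ι} {f g : κ → ι} {k l : κ}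

lemma update_apply_eq_update_apply_iff (hσ : Set.InjOn σ S) (hS : Set.MapsTo σ S Sᶜ)
    (hf : ∀ j, f j ∈ S) (hg : ∀ j, g j ∈ S) :
    update f k (σ (f k)) = update g l (σ (g l)) ↔ f = g ∧ k = l := by
  refine ⟨fun h => ?_, by rintro ⟨rfl, rfl⟩; rfl⟩
  have hkl : k = l := by
    by_contra hkl
    have hk : σ (f k) = g k := by simpa [update_of_ne hkl] using congrFun h k
    exact hS (hf k) (hk ▸ hg k)
  subst hkl
  refine ⟨funext fun j => ?_, rfl⟩
  have hj := congrFun h j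
  obtain rfl | hjk := eq_or_ne j k
  · exact hσ (hf j) (hg j) (by simpa using hj)
  · simpa [update_of_ne hjk] using hj

variable [Fintype κ] [Semiring R] {c : ι → R} {r : (κ → ι) →₀ R}

/-- The extension to the tensor power `(ι →₀ R)^{⊗κ}`, as a derivation (without signs), of the
weighted shift `δ_i ↦ c i • δ_{σ i}` of `ι →₀ R`. The tensor power is realized as the free module on
`κ`-tuples of basis indices. -/
def diagonalWeightedShift (σ : ι → ι) (c : ι → R) (r : (κ → ι) →₀ R) : (κ → ι) →₀ R :=
  r.sum fun f a => ∑ k, single (update f k (σ (f k))) (a * c (f k))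

lemma diagonalWeightedShift_apply_update (hσ : Set.InjOn σ S) (hS : Set.MapsTo σ S Sᶜ)
    (hr : ∀ g ∈ r.support, ∀ j, g j ∈ S) (hf : ∀ j, f j ∈ S) (k : κ) :
    diagonalWeightedShift σ c r (update f k (σ (f k))) = r f * c (f k) := by
  classical
  have hterm : ∀ g ∈ r.support, ∀ l,
      single (update g l (σ (g l))) (r g * c (g l)) (update f k (σ (f k))) =
        if g = f ∧ l = k then r g * c (g l) else 0 := fun g hg l => by
    simp only [single_apply, update_apply_eq_update_apply_iff hσ hS (hr g hg) hf]
  calc diagonalWeightedShift σ c r (update f k (σ (f k)))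
      = ∑ g ∈ r.support, ∑ l, if g = f ∧ l = k then r g * c (g l) else 0 := by
        simp only [diagonalWeightedShift, Finsupp.sum, finsetSum_apply]
        exact Finset.sum_congr rfl fun g hg => Finset.sum_congr rfl fun l _ => hterm g hg l
    _ = r f * c (f k) := by
        rw [Finset.sum_eq_single f]
        · simp
        · intro g _ hgf
          simp [hgf]
        · intro hfr
          simp [notMem_support_iff.mp hfr]

lemma eq_zero_of_diagonalWeightedShift_eq_zero [Nonempty κ] [NoZeroDivisors R]
    (hσ : Set.InjOn σ S) (hS : Set.MapsTo σ S Sᶜ) (hc : ∀ i ∈ S, c i ≠ 0)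
    (hr : ∀ f ∈ r.support, ∀ j, f j ∈ S) (h : diagonalWeightedShift σ c r = 0) : r = 0 := by
  by_contra hne
  obtain ⟨f, hf⟩ := support_nonempty_iff.mpr hne
  obtain ⟨k⟩ := ‹Nonempty κ›
  have hcoeff : r f * c (f k) = 0 := by
    rw [← diagonalWeightedShift_apply_update hσ hS hr (hr f hf) k, h, coe_zero, Pi.zero_apply]
  exact mul_ne_zero (mem_support_iff.mp hf) (hc _ (hr f hf k)) hcoeff

end DiagonalWeightedShift

lemma actN_e_eq_diagonalWeightedShift {i : Idx} {σ : Idx → Idx} {c : Idx → ℂ} (hi : par i = 0)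
    (hbk : ∀ j, bk i j = Finsupp.single (σ j) (c j)) (n : ℕ) (r : (Fin n → Idx) →₀ ℂ) :
    actN n (e i) r = diagonalWeightedShift σ c r := by
  rw [actN, e, Finsupp.sum_single_index (by simp)]
  simp [diagonalWeightedShift, hbk, hi, sgn_zero, Finset.smul_sum]

section AdjointL

open Filter

/-- The index of the basis element to which `ad L_m` sends a given basis element, up to the scalar
`adLCoeff m`. -/
def adLIdx (m : ℤ) : Idx → Idx
  | .L n => .L (m + n)
  | .T k => .T (k + m)
  | .G n => .G (n + 2 * m)

/-- The scalar by which `ad L_m` multiplies a given basis element while moving it along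
`adLIdx m`. -/
def adLCoeff (m : ℤ) : Idx → ℂ
  | .L n => m - n
  | .T k => -(k + 1 / 2)
  | .G n => (m - n) / 2

lemma bk_L (m : ℤ) (i : Idx) : bk (.L m) i = Finsupp.single (adLIdx m i) (adLCoeff m i) := by
  cases i <;> simp [bk, adLIdx, adLCoeff, e]

lemma adLIdx_injective (m : ℤ) : Function.Injective (adLIdx m) := by
  rintro (_ | _ | _) (_ | _ | _) h <;> simp_all [adLIdx]

lemma adLIdx_left_injective (i : Idx) : Function.Injective fun m => adLIdx m i := by
  intro m m' h
  cases i <;> simpa [adLIdx] using h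

lemma adLCoeff_T_ne_zero (m k : ℤ) : adLCoeff m (.T k) ≠ 0 := by
  intro h
  have hodd : ((2 * k + 1 : ℤ) : ℂ) = 0 := by
    simp only [adLCoeff] at h
    push_cast
    linear_combination -2 * h
  have : 2 * k + 1 = 0 := by exact_mod_cast hodd
  omega

lemma eventually_adLCoeff_ne_zero (i : Idx) : ∀ᶠ m in cofinite, adLCoeff m i ≠ 0 := by
  cases i with
  | T k => exact .of_forall fun m => adLCoeff_T_ne_zero m k
  | L n | G n =>
    filter_upwards [eventually_cofinite_ne n] with m hm
    simpa [adLCoeff, sub_eq_zero] using hm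

lemma eventually_mapsTo_adLIdx_compl {S : Set Idx} (hS : S.Finite) :
    ∀ᶠ m in cofinite, Set.MapsTo (adLIdx m) S Sᶜ :=
  hS.eventually_all.mpr fun i _ =>
    (adLIdx_left_injective i).tendsto_cofinite.eventually hS.eventually_cofinite_notMem

end AdjointL

theorem tensor_power_no_invariants_general (n : ℕ) (hn : 0 < n) (r : (Fin n → Idx) →₀ ℂ)
    (h : {m : ℤ | actN n (e (.L m)) r = 0}.Infinite) : r = 0 := by
  have : Nonempty (Fin n) := ⟨⟨0, hn⟩⟩
  let S : Set Idx := ⋃ f ∈ r.support, Set.range f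
  have hS : S.Finite := r.support.finite_toSet.biUnion fun f _ => Set.finite_range f
  have hr : ∀ f ∈ r.support, ∀ k, f k ∈ S := fun f hf k =>
    Set.mem_biUnion hf (Set.mem_range_self k)
  have hcoeff : ∀ᶠ m in Filter.cofinite, ∀ i ∈ S, adLCoeff m i ≠ 0 :=
    hS.eventually_all.mpr fun i _ => eventually_adLCoeff_ne_zero i
  obtain ⟨m, hm, hmaps, hne⟩ := ((Filter.frequently_cofinite_iff_infinite.mpr h).and_eventually
    ((eventually_mapsTo_adLIdx_compl hS).and hcoeff)).exists
  rw [actN_e_eq_diagonalWeightedShift rfl (bk_L m)] at hm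
  exact eq_zero_of_diagonalWeightedShift_eq_zero (adLIdx_injective m).injOn hmaps hne hr hm

/-- If `r ∈ 𝓛^{⊗n}` satisfies `x ∗ r = 0` for all `x ∈ 𝓛` (adjoint diagonal
action on the `n`-fold tensor power), then `r = 0`. -/
theorem tensor_power_no_invariants (n : ℕ) (hn : 0 < n) (r : (Fin n → Idx) →₀ ℂ)
    (h : ∀ x : Lsa, actN n x r = 0) : r = 0 :=
  tensor_power_no_invariants_general n hn r <| by simpa [h] using Set.infinite_univ (α := ℤ)

end
end N2
end
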